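/- arXiv:2004.07550 — 7 statements merged into one kernel-verified Lean document; each statement's English description precedes it below -/
import Mathlib

section
/- Hopf Trace Formula: Let (C_q, ∂_q) for q = 0, …, n be a chain complex of finite-dimensional vector spaces over a field (∂_q : C_q → C_{q−1} linear with ∂_{q−1} ∘ ∂_q = 0, and C_q = 0 for q < 0 and q > n), and let f_q : C_q → C_q be a chain map (f_{q−1} ∘ ∂_q = ∂_q ∘ f_q for all q). Let H_q = ker ∂_q / im ∂_{q+1} be the homology and f_{*,q} : H_q → H_q the endomorphism induced by f_q. Then ∑_{q=0}^n (−1)^q trace(f_q) = ∑_{q=0}^n (−1)^q trace(f_{*,q}). -/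
theorem trace_ses_aux {K A B D : Type*} [Field K] [AddCommGroup A] [Module K A]
    [AddCommGroup B] [Module K B] [AddCommGroup D] [Module K D]
    [FiniteDimensional K A] [FiniteDimensional K B] [FiniteDimensional K D]
    (i : A →ₗ[K] B) (p : B →ₗ[K] D) (hi : Function.Injective i) (hp : Function.Surjective p)
    (hpi : ∀ x, p (i x) = 0) (hex : ∀ y, p y = 0 → ∃ x, i x = y)
    (a : A →ₗ[K] A) (b : B →ₗ[K] B) (c : D →ₗ[K] D)
    (hab : ∀ x, b (i x) = i (a x)) (hbc : ∀ y, p (b y) = c (p y)) :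
    LinearMap.trace K B b = LinearMap.trace K A a + LinearMap.trace K D c := by
  obtain ⟨s, hs⟩ := p.exists_rightInverse_of_surjective (LinearMap.range_eq_top.2 hp)
  obtain ⟨r, hr⟩ := i.exists_leftInverse_of_injective (LinearMap.ker_eq_bot.2 hi)
  have hs' : ∀ x, p (s x) = x := fun x => LinearMap.congr_fun hs x
  have hr' : ∀ x, r (i x) = x := fun x => LinearMap.congr_fun hr x
  let t : B →ₗ[K] A := r ∘ₗ (LinearMap.id - s ∘ₗ p)
  have hit : ∀ y, i (t y) = y - s (p y) := by
    intro y
    obtain ⟨x, hx⟩ := hex (y - s (p y)) (by simp [hs'])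
    have : t y = r (y - s (p y)) := by simp [t]
    rw [this, ← hx, hr']
  have hti : ∀ x, t (i x) = x := by
    intro x
    simp [t, hpi, hr']
  have h1 : b = (i ∘ₗ (a ∘ₗ t)) + ((b ∘ₗ s) ∘ₗ p) := by
    ext y
    simp only [LinearMap.add_apply, LinearMap.comp_apply]
    rw [← hab, hit, map_sub]
    abel
  have h2 : (a ∘ₗ t) ∘ₗ i = a := by
    ext x
    simp [hti]
  have h3 : p ∘ₗ (b ∘ₗ s) = c := by
    ext x
    simp [hbc, hs']
  conv_lhs => rw [h1]
  rw [map_add, LinearMap.trace_comp_comm' (a ∘ₗ t) i, LinearMap.trace_comp_comm' p (b ∘ₗ s), h2, h3]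

/-- **Hopf Trace Formula.** Let `(C_q, ∂_q)`, `q = 0, …, n`, be a chain complex of
finite-dimensional vector spaces over a field `K` (with `C_q = 0` for `q > n`; here
`d q : C (q+1) →ₗ C q` denotes `∂_{q+1}`, so that `∂_{q-1} ∘ ∂_q = 0` reads
`d q ∘ d (q+1) = 0`), and let `f_q : C_q → C_q` be a chain map (`f_q ∘ ∂_{q+1} = ∂_{q+1} ∘ f_{q+1}`).
Let `Z q` be the cycles (`Z 0 = C 0` and `Z (q+1) = ker (d q)`), so the homology is
`H_q = Z q / (B q)` where `B q = im ∂_{q+1} = range (d q)`, and let `F q : H_q → H_q` be the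
endomorphism induced by `f q` (characterized by commuting with the quotient projection).
Then `∑_{q=0}^n (−1)^q trace(f_q) = ∑_{q=0}^n (−1)^q trace(F_q)`. -/
theorem hopf_trace_formula {K : Type*} [Field K] (n : ℕ)
    (C : ℕ → Type*) [∀ q, AddCommGroup (C q)] [∀ q, Module K (C q)]
    [∀ q, FiniteDimensional K (C q)]
    (hCtop : ∀ q, n < q → Subsingleton (C q))
    (d : ∀ q, C (q + 1) →ₗ[K] C q)
    (hdd : ∀ q, (d q).comp (d (q + 1)) = 0)
    (f : ∀ q, C q →ₗ[K] C q)
    (hf : ∀ q, (f q).comp (d q) = (d q).comp (f (q + 1)))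
    (Z : ∀ q, Submodule K (C q))
    (hZzero : Z 0 = ⊤)
    (hZsucc : ∀ q, Z (q + 1) = LinearMap.ker (d q))
    (F : ∀ q, ((Z q) ⧸ (LinearMap.range (d q)).comap (Z q).subtype) →ₗ[K]
        ((Z q) ⧸ (LinearMap.range (d q)).comap (Z q).subtype))
    (hF : ∀ q (z w : Z q), f q (z : C q) = (w : C q) →
        F q (Submodule.Quotient.mk z) = Submodule.Quotient.mk w) :
    ∑ q ∈ Finset.range (n + 1), (-1 : K) ^ q * LinearMap.trace K (C q) (f q) =
      ∑ q ∈ Finset.range (n + 1), (-1 : K) ^ q * LinearMap.trace K _ (F q) := by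
  have hf' : ∀ q x, f q (d q x) = d q (f (q + 1) x) := fun q x => LinearMap.congr_fun (hf q) x
  have hdd' : ∀ q x, d q (d (q + 1) x) = 0 := fun q x => LinearMap.congr_fun (hdd q) x
  have hB : ∀ q, ∀ x ∈ LinearMap.range (d q), f q x ∈ LinearMap.range (d q) := by
    rintro q _ ⟨x, rfl⟩
    exact ⟨f (q + 1) x, (hf' q x).symm⟩
  have hZ : ∀ q, ∀ x ∈ Z q, f q x ∈ Z q := by
    intro q x hx
    cases q with
    | zero => rw [hZzero]; trivial
    | succ q =>
      rw [hZsucc, LinearMap.mem_ker] at hx ⊢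
      rw [← hf', hx, map_zero]
  have hBZ : ∀ q, LinearMap.range (d q) ≤ Z q := by
    rintro q _ ⟨x, rfl⟩
    cases q with
    | zero => rw [hZzero]; trivial
    | succ q =>
      rw [hZsucc, LinearMap.mem_ker]
      exact hdd' q x
  have e1 : ∀ q, LinearMap.trace K _ ((f q).restrict (hZ q)) =
      LinearMap.trace K _ ((f q).restrict (hB q)) + LinearMap.trace K _ (F q) := by
    intro q
    refine trace_ses_aux (Submodule.inclusion (hBZ q)) (Submodule.mkQ _)
      (Submodule.inclusion_injective _) (Submodule.mkQ_surjective _) ?_ ?_ _ _ _ ?_ ?_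
    · intro x
      rw [Submodule.mkQ_apply, Submodule.Quotient.mk_eq_zero]
      exact x.2
    · intro y hy
      rw [Submodule.mkQ_apply, Submodule.Quotient.mk_eq_zero] at hy
      exact ⟨⟨y, hy⟩, rfl⟩
    · intro x
      rfl
    · intro y
      exact (hF q y _ rfl).symm
  have e2 : ∀ q, LinearMap.trace K _ (f (q + 1)) =
      LinearMap.trace K _ ((f (q + 1)).restrict (hZ (q + 1))) +
      LinearMap.trace K _ ((f q).restrict (hB q)) := by
    intro q
    refine trace_ses_aux (Z (q + 1)).subtype (d q).rangeRestrict
      (Submodule.subtype_injective _) (LinearMap.surjective_rangeRestrict _) ?_ ?_ _ _ _ ?_ ?_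
    · rintro ⟨x, hx⟩
      rw [hZsucc, LinearMap.mem_ker] at hx
      exact Subtype.ext hx
    · intro y hy
      have hy' : y ∈ Z (q + 1) := by
        rw [hZsucc, LinearMap.mem_ker]
        exact congrArg Subtype.val hy
      exact ⟨⟨y, hy'⟩, rfl⟩
    · intro x
      rfl
    · intro y
      exact Subtype.ext (hf' q y).symm
  have e0 : LinearMap.trace K _ (f 0) = LinearMap.trace K _ ((f 0).restrict (hZ 0)) := by
    have := trace_ses_aux (Z 0).subtype (0 : C 0 →ₗ[K] PUnit.{1})
      (Submodule.subtype_injective _) (fun x => ⟨0, rfl⟩) (fun _ => rfl)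
      (fun y _ => ⟨⟨y, by rw [hZzero]; trivial⟩, rfl⟩)
      ((f 0).restrict (hZ 0)) (f 0) 0 (fun _ => rfl) (fun _ => rfl)
    rwa [map_zero, add_zero] at this
  have key : ∀ N : ℕ, ∑ q ∈ Finset.range (N + 1), (-1 : K) ^ q * LinearMap.trace K (C q) (f q) =
      ∑ q ∈ Finset.range (N + 1), (-1 : K) ^ q * LinearMap.trace K _ (F q) +
      (-1 : K) ^ N * LinearMap.trace K _ ((f N).restrict (hB N)) := by
    intro N
    induction N with
    | zero =>
      simp only [zero_add, Finset.sum_range_one, pow_zero, one_mul]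
      rw [e0, e1, add_comm]
    | succ N ih =>
      rw [Finset.sum_range_succ, ih, e2, e1, Finset.sum_range_succ _ (N + 1)]
      ring
  have hz : (f n).restrict (hB n) = 0 := by
    have := hCtop (n + 1) (Nat.lt_succ_self n)
    ext ⟨x, y, rfl⟩
    have : y = 0 := Subsingleton.elim _ _
    subst this
    simp
  rw [key, hz, map_zero, mul_zero, add_zero]
end

section
/- Let (X,κ) be a finite digital image and let f, g : X → X be continuous self-maps that are strongly homotopic (f ≃* g). Then L(f) = L(g). -/
/-- A function `f : (X,κ) → (Y,λ)` between digital images is (digitally) continuous if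
whenever `x, y` are `κ`-adjacent, `f x = f y` or `f x, f y` are `λ`-adjacent. -/
def DigCont {X Y : Type*} (κ : X → X → Prop) (lam : Y → Y → Prop) (f : X → Y) : Prop :=
  ∀ x y, κ x y → f x = f y ∨ lam (f x) (f y)

/-- A clique of `(X,κ)`: a nonempty set of mutually `κ`-adjacent points. -/
def IsClique {X : Type*} (κ : X → X → Prop) (S : Finset X) : Prop :=
  S.Nonempty ∧ ∀ x ∈ S, ∀ y ∈ S, x ≠ y → κ x y

/-- `x` is an approximate fixed point of `f`: `f x = x` or `f x` is adjacent to `x`. -/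
def ApproxFix {X : Type*} (κ : X → X → Prop) (f : X → X) (x : X) : Prop :=
  f x = x ∨ κ x (f x)

/-- A strong homotopy between `f, g : (X,κ) → (Y,λ)` is `H : X × {0,…,m} → Y` with
`H(x,0) = f(x)`, `H(x,m) = g(x)`, such that whenever (`x = x′` or `x,x′` are `κ`-adjacent)
and `|t − t′| ≤ 1`, with `(x,t) ≠ (x′,t′)`, the values `H(x,t), H(x′,t′)` are equal or
`λ`-adjacent.  `f ≃* g` iff such an `H` exists. -/
def StrongHomotopic {X Y : Type*} (κ : X → X → Prop) (lam : Y → Y → Prop)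
    (f g : X → Y) : Prop :=
  ∃ (m : ℕ) (H : X → ℕ → Y),
    (∀ x, H x 0 = f x) ∧ (∀ x, H x m = g x) ∧
    ∀ x x' (t t' : ℕ), t ≤ m → t' ≤ m → (x = x' ∨ κ x x') →
      (t = t' ∨ t + 1 = t' ∨ t' + 1 = t) → (x ≠ x' ∨ t ≠ t') →
      (H x t = H x' t' ∨ lam (H x t) (H x' t'))

/-- The permutation induced by `f` on a finite set `S` with `f(S) = S`. -/
noncomputable def fixedSetPerm {X : Type*} [DecidableEq X] (f : X → X) (S : Finset X)
    (h : S.image f = S) : Equiv.Perm {x // x ∈ S} :=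
  Equiv.ofBijective
    (fun x => ⟨f x.1, by
      have hx : f x.1 ∈ S.image f := Finset.mem_image_of_mem f x.2
      rwa [h] at hx⟩)
    (by
      rw [Fintype.bijective_iff_surjective_and_card]
      refine ⟨fun y => ?_, rfl⟩
      have hy : (y : X) ∈ S.image f := by rw [h]; exact y.2
      obtain ⟨x, hx, hfx⟩ := Finset.mem_image.mp hy
      exact ⟨⟨x, hx⟩, Subtype.ext hfx⟩)

open Classical in
/-- The simplicial Lefschetz number `L(f) = ∑_S (−1)^{|S|−1} sgn(f|_S)`, summing over all
cliques `S` of `(X,κ)` with `f(S) = S`. -/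
noncomputable def simpLef {X : Type*} [Fintype X] [DecidableEq X]
    (κ : X → X → Prop) (f : X → X) : ℤ :=
  ∑ S : Finset X,
    if h : IsClique κ S ∧ S.image f = S then
      (-1 : ℤ) ^ (S.card - 1) * ((Equiv.Perm.sign (fixedSetPerm f S h.2) : ℤˣ) : ℤ)
    else 0

open Classical in
/-- The simplicial Euler characteristic `χ(X) = ∑_{q≥0} (−1)^q s_q`, where `s_q` is the
number of cliques of `X` with exactly `q+1` points; equivalently `∑_S (−1)^{|S|−1}` over
all cliques `S`. -/
noncomputable def simpEuler {X : Type*} [Fintype X] (κ : X → X → Prop) : ℤ :=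
  ∑ S : Finset X, if IsClique κ S then (-1 : ℤ) ^ (S.card - 1) else 0

open Classical in
/-- The 0-1 matrix of a self-map. -/
noncomputable def mapMat {X : Type*} (k : X → X) : Matrix X X ℤ :=
  fun x y => if k y = x then 1 else 0

theorem mapMat_update {X : Type*} [DecidableEq X] (k : X → X) (t c : X) :
    mapMat (Function.update k t c) = (mapMat k).updateCol t (Pi.single c 1) := by
  ext x y
  by_cases h : y = t
  · subst h
    simp [mapMat, Pi.single_apply, eq_comm]
  · simp [mapMat, h]

theorem sum_det_update {X : Type*} [Fintype X] [DecidableEq X] (k : X → X) (c : X) :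
    ∑ t, (mapMat (Function.update k t c)).det = (mapMat k).det := by
  have h1 := Matrix.mulVec_cramer (mapMat k) (Pi.single c 1)
  have h2 := congrArg (fun v : X → ℤ => ∑ x, v x) h1
  simp only [Matrix.mulVec, dotProduct] at h2
  rw [Finset.sum_comm] at h2
  simp only [← Finset.sum_mul] at h2
  have h3 : ∀ y, ∑ x, mapMat k x y = 1 := by
    intro y
    rw [Finset.sum_eq_single (k y)]
    · simp [mapMat]
    · intro b _ hb
      simp [mapMat, hb.symm]
    · simp
  simpa [h3, Matrix.cramer_apply, ← mapMat_update, Pi.single_apply] using h2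

theorem inj_of_det_ne {X : Type*} [Fintype X] [DecidableEq X] (k : X → X)
    (h : (mapMat k).det ≠ 0) : Function.Injective k := by
  intro x y hxy
  by_contra hne
  exact h (Matrix.det_zero_of_column_eq hne (fun i => by simp [mapMat, hxy]))

theorem image_of_det_ne {X : Type*} [Fintype X] [DecidableEq X] (f : X → X) (S : Finset X)
    (h : (mapMat (S.piecewise f id)).det ≠ 0) : S.image f = S := by
  have hi := inj_of_det_ne _ h
  apply Finset.eq_of_subset_of_card_le
  · intro y hy
    obtain ⟨x, hx, rfl⟩ := Finset.mem_image.1 hy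
    by_contra hn
    have : x = f x := hi (by simp [Finset.piecewise, hx, hn])
    exact hn (this ▸ hx)
  · rw [Finset.card_image_of_injOn]
    intro x hx y hy hxy
    have hx' : x ∈ S := hx
    have hy' : y ∈ S := hy
    exact hi (by simpa [Finset.piecewise, hx', hy'] using hxy)

theorem det_of_image {X : Type*} [Fintype X] [DecidableEq X] (f : X → X) (S : Finset X)
    (h : S.image f = S) :
    (mapMat (S.piecewise f id)).det = ((Equiv.Perm.sign (fixedSetPerm f S h) : ℤˣ) : ℤ) := by
  rw [← Equiv.Perm.sign_ofSubtype (fixedSetPerm f S h), ← Equiv.Perm.sign_inv,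
    ← Int.cast_id (n := ((Equiv.Perm.sign
      (Equiv.Perm.ofSubtype (fixedSetPerm f S h))⁻¹ : ℤˣ) : ℤ)),
    ← Matrix.det_permutation]
  congr 1
  have key : ∀ y, Equiv.Perm.ofSubtype (fixedSetPerm f S h) y = S.piecewise f id y := by
    intro y
    by_cases hy : y ∈ S
    · rw [Equiv.Perm.ofSubtype_apply_of_mem _ hy]
      simp [fixedSetPerm, hy]
    · rw [Equiv.Perm.ofSubtype_apply_of_not_mem _ hy]
      simp [hy]
  ext x y
  simp only [mapMat, ← key, Equiv.Perm.permMatrix, Equiv.toPEquiv_apply, PEquiv.toMatrix_apply,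
    Option.mem_def, Option.some.injEq]
  congr 1
  rw [Equiv.Perm.inv_eq_iff_eq]
  exact propext eq_comm

open Classical in
noncomputable def clw {X : Type*} (κ : X → X → Prop) (S : Finset X) : ℤ :=
  if IsClique κ S then (-1) ^ S.card else 0

theorem simpLef_eq {X : Type*} [Fintype X] [DecidableEq X] (κ : X → X → Prop) (f : X → X) :
    simpLef κ f = - ∑ S : Finset X, clw κ S * (mapMat (S.piecewise f id)).det := by
  rw [simpLef, ← Finset.sum_neg_distrib]
  refine Finset.sum_congr rfl fun S _ => ?_
  by_cases hc : IsClique κ S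
  · obtain ⟨n, hn⟩ := Nat.exists_eq_succ_of_ne_zero (Finset.card_pos.2 hc.1).ne'
    by_cases hi : S.image f = S
    · rw [dif_pos ⟨hc, hi⟩, det_of_image f S hi, clw, if_pos hc, hn]
      simp [pow_succ]
    · rw [dif_neg (fun h => hi h.2)]
      have : (mapMat (S.piecewise f id)).det = 0 := by
        by_contra h
        exact hi (image_of_det_ne f S h)
      simp [this]
  · rw [dif_neg (fun h => hc h.1)]
    simp [clw, hc]

theorem update_pw {X : Type*} [DecidableEq X] (f : X → X) (S : Finset X) (t c : X) :
    Function.update ((insert t S).piecewise f id) t c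
      = Function.update (S.piecewise f id) t c := by
  ext y
  by_cases h : y = t
  · subst h; simp
  · simp [h, Finset.piecewise]

theorem update_pw2 {X : Type*} [DecidableEq X] (f : X → X) (S : Finset X) (t c : X)
    (ht : t ∈ S) :
    Function.update (S.piecewise f id) t c = S.piecewise (Function.update f t c) id := by
  ext y
  by_cases h : y = t
  · subst h; simp [ht]
  · simp [h, Finset.piecewise]

theorem clique_iff {X : Type*} [Fintype X] [DecidableEq X]
    (κ : X → X → Prop) (hsym : Symmetric κ)
    (f : X → X) (hf : DigCont κ κ f) (a c : X)
    (hc : ∀ x, (x = a ∨ κ x a) → f x = c ∨ κ (f x) c)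
    (S : Finset X) (t : X) (ha : a ∈ S) (ht : t ∉ S)
    (hd : (mapMat (Function.update (S.piecewise f id) t c)).det ≠ 0) :
    IsClique κ (insert t S) ↔ IsClique κ S := by
  constructor
  · intro h
    exact ⟨⟨a, ha⟩, fun x hx y hy => h.2 x (by simp [hx]) y (by simp [hy])⟩
  · intro h
    refine ⟨⟨t, by simp⟩, ?_⟩
    rw [← update_pw, update_pw2 _ _ _ _ (by simp)] at hd
    have him := image_of_det_ne _ _ hd
    have hm : ∀ z ∈ insert t S, z = c ∨ ∃ x ∈ S, z = f x := by
      intro z hz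
      rw [← him] at hz
      obtain ⟨x, hx, rfl⟩ := Finset.mem_image.1 hz
      by_cases hxt : x = t
      · left; simp [hxt]
      · right
        exact ⟨x, by simpa [hxt] using hx, by simp [hxt]⟩
    have hS : ∀ x ∈ S, x = a ∨ κ x a := by
      intro x hx
      by_cases hxa : x = a
      · exact Or.inl hxa
      · exact Or.inr (h.2 x hx a ha hxa)
    intro x hx y hy hxy
    rcases hm x hx with rfl | ⟨x', hx', rfl⟩ <;> rcases hm y hy with rfl | ⟨y', hy', rfl⟩
    · exact absurd rfl hxy
    · exact hsym ((hc y' (hS y' hy')).resolve_left (Ne.symm hxy))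
    · exact (hc x' (hS x' hx')).resolve_left hxy
    · exact (hf x' y' (h.2 x' hx' y' hy' (fun e => hxy (by rw [e])))).resolve_left hxy

theorem clw_cancel {X : Type*} [Fintype X] [DecidableEq X]
    (κ : X → X → Prop) (hsym : Symmetric κ)
    (f : X → X) (hf : DigCont κ κ f) (a c : X)
    (hc : ∀ x, (x = a ∨ κ x a) → f x = c ∨ κ (f x) c)
    (S : Finset X) (t : X) (ha : a ∈ S) (ht : t ∉ S) :
    clw κ S * (mapMat (Function.update (S.piecewise f id) t c)).det
     + clw κ (insert t S) *
      (mapMat (Function.update ((insert t S).piecewise f id) t c)).det = 0 := by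
  rw [update_pw]
  by_cases hd : (mapMat (Function.update (S.piecewise f id) t c)).det = 0
  · simp [hd]
  · have := clique_iff κ hsym f hf a c hc S t ha ht hd
    by_cases hS : IsClique κ S
    · rw [clw, clw, if_pos hS, if_pos (this.2 hS), Finset.card_insert_of_notMem ht]
      ring
    · rw [clw, clw, if_neg hS, if_neg (fun h => hS (this.1 h))]
      ring

theorem step_one {X : Type*} [Fintype X] [DecidableEq X]
    (κ : X → X → Prop) (hsym : Symmetric κ)
    (f : X → X) (hf : DigCont κ κ f) (a c : X)
    (hc : ∀ x, (x = a ∨ κ x a) → f x = c ∨ κ (f x) c) :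
    simpLef κ (Function.update f a c) = simpLef κ f := by
  rw [simpLef_eq, simpLef_eq, neg_inj, eq_comm, ← sub_eq_zero, ← Finset.sum_sub_distrib]
  have h1 : ∀ S : Finset X, clw κ S * (mapMat (S.piecewise f id)).det
      - clw κ S * (mapMat (S.piecewise (Function.update f a c) id)).det
      = if a ∈ S then ∑ t ∈ Finset.univ.erase a,
          clw κ S * (mapMat (Function.update (S.piecewise f id) t c)).det else 0 := by
    intro S
    split_ifs with ha
    · rw [← update_pw2 _ _ _ _ ha, ← sum_det_update (S.piecewise f id) c,
        ← Finset.add_sum_erase _ _ (Finset.mem_univ a), ← Finset.mul_sum]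
      ring
    · have : S.piecewise (Function.update f a c) id = S.piecewise f id := by
        ext y
        by_cases hy : y ∈ S
        · have : y ≠ a := fun e => ha (e ▸ hy)
          simp [hy, this]
        · simp [hy]
      rw [this, sub_self]
  rw [Finset.sum_congr rfl (fun S _ => h1 S), ← Finset.sum_filter, Finset.sum_comm]
  refine Finset.sum_eq_zero fun t ht => ?_
  have hta : t ≠ a := (Finset.mem_erase.1 ht).1
  refine Finset.sum_involution (fun S _ => if t ∈ S then S.erase t else insert t S) ?_ ?_ ?_ ?_
  · intro S hS
    have ha : a ∈ S := (Finset.mem_filter.1 hS).2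
    by_cases hm : t ∈ S
    · have := clw_cancel κ hsym f hf a c hc (S.erase t) t (by simp [ha, hta.symm]) (by simp)
      rw [Finset.insert_erase hm] at this
      rw [if_pos hm, add_comm]; exact this
    · rw [if_neg hm]
      exact clw_cancel κ hsym f hf a c hc S t ha hm
  · intro S hS _ h
    by_cases hm : t ∈ S
    · simp only [hm, if_true] at h
      rw [← h] at hm
      simp at hm
    · simp only [hm, if_false] at h
      exact hm (h ▸ Finset.mem_insert_self t S)
  · intro S hS
    have ha : a ∈ S := (Finset.mem_filter.1 hS).2
    by_cases hm : t ∈ S <;> simp [hm, ha, hta.symm]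
  · intro S hS
    by_cases hm : t ∈ S <;> simp [hm]

theorem step_full {X : Type*} [Fintype X] [DecidableEq X]
    (κ : X → X → Prop) (hsym : Symmetric κ)
    (f g : X → X) (hf : DigCont κ κ f) (hg : DigCont κ κ g)
    (hc : ∀ x y, (x = y ∨ κ x y) → f x = g y ∨ κ (f x) (g y)) :
    simpLef κ f = simpLef κ g := by
  have hmix : ∀ A : Finset X, DigCont κ κ (A.piecewise g f) := by
    intro A x y hxy
    by_cases hx : x ∈ A <;> by_cases hy : y ∈ A <;> simp only [Finset.piecewise, hx, hy,
      if_true, if_false]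
    · exact hg x y hxy
    · exact (hc y x (Or.inr (hsym hxy))).imp Eq.symm (fun h => hsym h)
    · exact hc x y (Or.inr hxy)
    · exact hf x y hxy
  have h : ∀ A : Finset X, simpLef κ (A.piecewise g f) = simpLef κ f := by
    intro A
    induction A using Finset.induction_on with
    | empty => simp
    | insert a A ha ih =>
      rw [Finset.piecewise_insert, step_one κ hsym _ (hmix A) a (g a) ?_, ih]
      intro x hx
      by_cases hxA : x ∈ A <;> simp only [Finset.piecewise, hxA, if_true, if_false]
      · rcases hx with rfl | hx
        · exact Or.inl rfl
        · exact hg x a hx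
      · exact hc x a hx
  have := h Finset.univ
  rw [Finset.piecewise_univ] at this
  exact this.symm

/-- Let `(X,κ)` be a finite digital image and `f, g : X → X` continuous self-maps that are
strongly homotopic. Then `L(f) = L(g)`. -/
theorem simpLef_eq_of_strongHomotopic {X : Type*} [Fintype X] [DecidableEq X]
    (κ : X → X → Prop) (hsym : Symmetric κ) (hirr : Irreflexive κ)
    (f g : X → X) (hf : DigCont κ κ f) (hg : DigCont κ κ g)
    (hfg : StrongHomotopic κ κ f g) :
    simpLef κ f = simpLef κ g := by
  obtain ⟨m, H, h0, hm, hH⟩ := hfg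
  have hcont : ∀ t ≤ m, DigCont κ κ (fun x => H x t) := by
    intro t ht x y hxy
    exact hH x y t t ht ht (Or.inr hxy) (Or.inl rfl) (Or.inl (fun e => hirr x (by
      rw [← e] at hxy; exact hxy)))
  have hL : ∀ t ≤ m, simpLef κ (fun x => H x t) = simpLef κ (fun x => H x 0) := by
    intro t
    induction t with
    | zero => intro _; rfl
    | succ t ih =>
      intro ht
      rw [← ih (by omega)]
      refine (step_full κ hsym _ _ (hcont t (by omega)) (hcont _ ht) ?_).symm
      intro x y hxy
      exact hH x y t (t + 1) (by omega) ht hxy (Or.inr (Or.inl rfl)) (Or.inr (by omega))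
  have := hL m le_rfl
  rw [show (fun x => H x m) = g from funext hm, show (fun x => H x 0) = f from funext h0] at this
  exact this.symm
end

section
/- Let (X,κ) be a finite digital image and f : X → X a continuous self-map with L(f) ≠ 0. Then every continuous self-map g : X → X that is strongly homotopic to f has a fixed point or has at least two distinct approximate fixed points. -/
set_option linter.unusedSectionVars false

namespace DLef

variable {X : Type*} [Fintype X] [DecidableEq X]

noncomputable def ep (f : X → X) (S : Finset X) : Equiv.Perm X :=
  if h : S.image f = S then Equiv.Perm.ofSubtype (fixedSetPerm f S h) else 1

theorem ep_mem {f : X → X} {S : Finset X} (h : S.image f = S) {x : X} (hx : x ∈ S) :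
    ep f S x = f x := by
  rw [ep, dif_pos h, Equiv.Perm.ofSubtype_apply_of_mem _ hx]
  rfl

theorem ep_not_mem (f : X → X) (S : Finset X) {x : X} (hx : x ∉ S) :
    ep f S x = x := by
  unfold ep
  split_ifs with h
  · exact Equiv.Perm.ofSubtype_apply_of_not_mem _ hx
  · rfl

noncomputable def W (f : X → X) (S : Finset X) : ℤ :=
  (-1) ^ S.card * ((Equiv.Perm.sign (ep f S) : ℤˣ) : ℤ)

theorem mem_map {f : X → X} {S : Finset X} (h : S.image f = S) {x : X} (hx : x ∈ S) :
    f x ∈ S := by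
  have := Finset.mem_image_of_mem f hx
  rwa [h] at this

theorem mem_iter {f : X → X} {S : Finset X} (h : S.image f = S) {x : X} (hx : x ∈ S) (n : ℕ) :
    f^[n] x ∈ S := by
  induction n with
  | zero => exact hx
  | succ n ih => rw [Function.iterate_succ_apply']; exact mem_map h ih

theorem ep_pow {f : X → X} {S : Finset X} (h : S.image f = S) {x : X} (hx : x ∈ S) (n : ℕ) :
    (ep f S ^ n) x = f^[n] x := by
  induction n with
  | zero => rfl
  | succ n ih =>
    rw [Function.iterate_succ_apply', pow_succ', Equiv.Perm.mul_apply, ih,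
      ep_mem h (mem_iter h hx n)]

theorem periodic_of_mem {f : X → X} {S : Finset X} (h : S.image f = S) {x : X} (hx : x ∈ S) :
    x ∈ Function.periodicPts f := by
  refine ⟨orderOf (ep f S), orderOf_pos _, ?_⟩
  have := ep_pow h hx (orderOf (ep f S))
  rw [pow_orderOf_eq_one] at this
  exact this.symm

theorem image_congr' {f g : X → X} {S : Finset X} (h : ∀ x ∈ S, f x = g x) :
    S.image f = S.image g := Finset.image_congr h

theorem W_congr {f g : X → X} {S : Finset X} (hf : S.image f = S) (h : ∀ x ∈ S, f x = g x) :
    W f S = W g S := by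
  have hg : S.image g = S := by rw [← image_congr' h, hf]
  have : ep f S = ep g S := by
    ext x
    by_cases hx : x ∈ S
    · rw [ep_mem hf hx, ep_mem hg hx, h x hx]
    · rw [ep_not_mem f S hx, ep_not_mem g S hx]
  rw [W, W, this]

theorem image_union' {f : X → X} {A B : Finset X} (hA : A.image f = A) (hB : B.image f = B) :
    (A ∪ B).image f = A ∪ B := by
  rw [Finset.image_union, hA, hB]

theorem image_sdiff' {f : X → X} {A B : Finset X} (hA : A.image f = A) (hB : B.image f = B)
    : (A \ B).image f = A \ B := by
  apply Finset.eq_of_subset_of_card_le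
  · intro y hy
    obtain ⟨x, hx, rfl⟩ := Finset.mem_image.1 hy
    rw [Finset.mem_sdiff] at hx ⊢
    refine ⟨mem_map hA hx.1, fun hb => hx.2 ?_⟩
    obtain ⟨n, hn, hp⟩ := periodic_of_mem hA hx.1
    have := mem_iter hB hb (n - 1)
    rw [← Function.iterate_succ_apply, show (n-1).succ = n by omega] at this
    rwa [hp] at this
  · rw [Finset.card_image_of_injOn]
    intro x hx y hy hxy
    have hx' := (Finset.mem_sdiff.1 hx).1
    have hy' := (Finset.mem_sdiff.1 hy).1
    apply (ep f A).injective
    rw [ep_mem hA hx', ep_mem hA hy']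
    exact hxy

theorem W_union {f : X → X} {A B : Finset X} (hA : A.image f = A) (hB : B.image f = B)
    (hd : Disjoint A B) : W f (A ∪ B) = W f A * W f B := by
  have hU := image_union' hA hB
  have : ep f (A ∪ B) = ep f A * ep f B := by
    ext x
    rw [Equiv.Perm.mul_apply]
    by_cases hb : x ∈ B
    · rw [ep_mem hB hb, ep_mem hU (Finset.mem_union_right _ hb),
        ep_not_mem f A (Finset.disjoint_right.1 hd (mem_map hB hb))]
    · rw [ep_not_mem f B hb]
      by_cases ha : x ∈ A
      · rw [ep_mem hA ha, ep_mem hU (Finset.mem_union_left _ ha)]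
      · rw [ep_not_mem f A ha, ep_not_mem]
        simp [ha, hb]
  rw [W, W, W, this, Equiv.Perm.sign_mul, Finset.card_union_of_disjoint hd, pow_add]
  push_cast
  ring

open Classical in
noncomputable def Orb (f : X → X) (p : X) : Finset X :=
  Finset.univ.filter fun x => ∃ n : ℕ, f^[n] p = x

theorem mem_Orb {f : X → X} {p x : X} : x ∈ Orb f p ↔ ∃ n : ℕ, f^[n] p = x := by
  simp [Orb]

theorem self_mem_Orb (f : X → X) (p : X) : p ∈ Orb f p := mem_Orb.2 ⟨0, rfl⟩

theorem back {f : X → X} {p : X} (hp : p ∈ Function.periodicPts f) (n : ℕ) :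
    ∃ m, f^[m] (f^[n] p) = p := by
  obtain ⟨k, hk, hkp⟩ := hp
  refine ⟨n * k - n, ?_⟩
  rw [← Function.iterate_add_apply, Nat.sub_add_cancel (Nat.le_mul_of_pos_right _ hk)]
  exact hkp.const_mul n

theorem image_Orb {f : X → X} {p : X} (hp : p ∈ Function.periodicPts f) :
    (Orb f p).image f = Orb f p := by
  ext x
  simp only [Finset.mem_image, mem_Orb]
  constructor
  · rintro ⟨_, ⟨n, rfl⟩, rfl⟩
    exact ⟨n + 1, Function.iterate_succ_apply' _ _ _⟩
  · rintro ⟨n, rfl⟩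
    obtain ⟨k, hk, hkp⟩ := hp
    refine ⟨f^[n + (k - 1)] p, ⟨_, rfl⟩, ?_⟩
    rw [← Function.iterate_succ_apply' f, show (n + (k-1)).succ = n + k by omega,
      Function.iterate_add_apply, hkp]

theorem Orb_sub_or_disj {f : X → X} {p : X} (hp : p ∈ Function.periodicPts f) {S : Finset X}
    (hS : S.image f = S) (hpS : p ∉ S) : Disjoint S (Orb f p) := by
  rw [Finset.disjoint_right]
  intro x hx hxS
  obtain ⟨n, rfl⟩ := mem_Orb.1 hx
  obtain ⟨m, hm⟩ := back hp n
  have := mem_iter hS hxS m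
  rw [hm] at this
  exact hpS this

theorem Orb_sub {f : X → X} {p : X} {S : Finset X}
    (hS : S.image f = S) (hpS : p ∈ S) : Orb f p ⊆ S := by
  intro x hx
  obtain ⟨n, rfl⟩ := mem_Orb.1 hx
  exact mem_iter hS hpS n

theorem W_Orb {f : X → X} {p : X} (hp : p ∈ Function.periodicPts f) : W f (Orb f p) = -1 := by
  have hI := image_Orb hp
  by_cases hs : Orb f p = {p}
  · have hfp : f p = p := by
      have := mem_map hI (self_mem_Orb f p)
      rw [hs] at this
      simpa using this
    have : ep f (Orb f p) = 1 := by
      ext x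
      by_cases hx : x ∈ Orb f p
      · rw [ep_mem hI hx]
        rw [hs, Finset.mem_singleton] at hx
        subst hx
        simpa using hfp
      · rw [ep_not_mem _ _ hx]; rfl
    rw [W, this, hs]; simp
  · have hfix : ∀ x ∈ Orb f p, f x ≠ x := by
      intro x hx hfx
      apply hs
      obtain ⟨n, rfl⟩ := mem_Orb.1 hx
      obtain ⟨m, hm⟩ := back hp n
      rw [Function.iterate_fixed hfx] at hm
      rw [hm] at hfx
      ext y
      rw [mem_Orb, Finset.mem_singleton]
      constructor
      · rintro ⟨k, rfl⟩; exact Function.iterate_fixed hfx k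
      · rintro rfl; exact ⟨0, rfl⟩
    have hc : (ep f (Orb f p)).IsCycle := by
      refine ⟨p, ?_, ?_⟩
      · rw [ep_mem hI (self_mem_Orb f p)]; exact hfix _ (self_mem_Orb f p)
      · intro y hy
        have hyO : y ∈ Orb f p := by
          by_contra h
          exact hy (ep_not_mem _ _ h)
        obtain ⟨n, rfl⟩ := mem_Orb.1 hyO
        exact ⟨n, by rw [zpow_natCast, ep_pow hI (self_mem_Orb f p)]⟩
    have hsup : (ep f (Orb f p)).support = Orb f p := by
      ext x
      rw [Equiv.Perm.mem_support]
      constructor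
      · intro hy
        by_contra h
        exact hy (ep_not_mem _ _ h)
      · intro hx
        rw [ep_mem hI hx]
        exact hfix x hx
    rw [W, hc.sign, hsup]
    push_cast
    rw [mul_neg, ← mul_pow]
    simp

theorem exists_periodic (f : X → X) (c : X) : ∃ m, f^[m] c ∈ Function.periodicPts f := by
  obtain ⟨m, n, hne, h⟩ := Finite.exists_ne_map_eq_of_infinite (fun n : ℕ => f^[n] c)
  have key : ∀ m n : ℕ, m < n → f^[m] c = f^[n] c → f^[m] c ∈ Function.periodicPts f := by
    intro m n hmn h
    refine ⟨n - m, by omega, ?_⟩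
    rw [Function.IsPeriodicPt, Function.IsFixedPt, ← Function.iterate_add_apply,
      Nat.sub_add_cancel hmn.le, h]
  rcases lt_or_gt_of_ne hne with hl | hl
  · exact ⟨m, key m n hl h⟩
  · exact ⟨n, key n m hl h.symm⟩

def Cl (R : X → X → Prop) (S : Finset X) : Prop := ∀ x ∈ S, ∀ y ∈ S, R x y

theorem Cl_union {R : X → X → Prop} (hs : ∀ x y, R x y → R y x) {f g : X → X}
    (hgg : ∀ x y, R x y → R (g x) (g y)) (hfg : ∀ x y, R x y → R (f x) (g y))
    {a : X} {S : Finset X} (haS : a ∈ S) (hS : S.image f = S) (hC : Cl R S) :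
    Cl R (S ∪ Orb g a) := by
  have h1 : ∀ n : ℕ, ∀ s ∈ S, R s (g^[n] a) := by
    intro n
    induction n with
    | zero => intro s hs; exact hC _ hs _ haS
    | succ n ih =>
      intro s hs
      rw [← hS] at hs
      obtain ⟨t, ht, rfl⟩ := Finset.mem_image.1 hs
      rw [Function.iterate_succ_apply']
      exact hfg _ _ (ih t ht)
  have h2 : ∀ n m : ℕ, R (g^[n] a) (g^[m] a) := by
    intro n
    induction n with
    | zero => intro m; exact h1 m a haS
    | succ n ih =>
      intro m
      cases m with
      | zero => exact hs _ _ (h1 _ a haS)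
      | succ m =>
        rw [Function.iterate_succ_apply', Function.iterate_succ_apply']
        exact hgg _ _ (ih m)
  intro x hx y hy
  rw [Finset.mem_union, mem_Orb] at hx hy
  rcases hx with hx | ⟨n, rfl⟩ <;> rcases hy with hy | ⟨m, rfl⟩
  · exact hC _ hx _ hy
  · exact h1 _ _ hx
  · exact hs _ _ (h1 _ _ hy)
  · exact h2 _ _

def P (R : X → X → Prop) (a : X) (f : X → X) (S : Finset X) : Prop :=
  a ∈ S ∧ S.image f = S ∧ Cl R S

open Classical in
noncomputable def F (R : X → X → Prop) (a : X) (f : X → X) : ℤ :=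
  ∑ S ∈ Finset.univ.filter (P R a f), W f S

theorem F_zero {R : X → X → Prop} {a : X} {f : X → X} (ha : a ∉ Function.periodicPts f) :
    F R a f = 0 := by
  classical
  rw [F, Finset.filter_false_of_mem, Finset.sum_empty]
  intro S _ hS
  exact ha (periodic_of_mem hS.2.1 hS.1)

theorem F_zero' {R : X → X → Prop} (hs : ∀ x y, R x y → R y x) {f g : X → X}
    (hgg : ∀ x y, R x y → R (g x) (g y)) (hfg : ∀ x y, R x y → R (f x) (g y))
    {a : X} (heq : ∀ x, x ≠ a → f x = g x) (ha : a ∉ Function.periodicPts g) :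
    F R a f = 0 := by
  classical
  obtain ⟨m, hm⟩ := exists_periodic g a
  set Z := Orb g (g^[m] a) with hZ
  have hZg : Z.image g = Z := image_Orb hm
  have haZ : a ∉ Z := fun h => ha (periodic_of_mem hZg h)
  have hfgZ : ∀ x ∈ Z, g x = f x := fun x hx => (heq x (fun h => haZ (h ▸ hx))).symm
  have hZf : Z.image f = Z := by rw [← image_congr' hfgZ, hZg]
  have hWZ : W f Z = -1 := by rw [← W_congr hZg hfgZ, W_Orb hm]
  have hZsub : Z ⊆ Orb g a := by
    intro x hx
    obtain ⟨n, rfl⟩ := mem_Orb.1 hx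
    exact mem_Orb.2 ⟨n + m, Function.iterate_add_apply _ _ _ _⟩
  obtain ⟨z, hz⟩ : Z.Nonempty := ⟨_, self_mem_Orb _ _⟩
  have hdich : ∀ S : Finset X, S.image f = S → ¬ Z ⊆ S → Disjoint S Z := by
    intro S hS hn
    rw [Finset.disjoint_right]
    intro x hx hxS
    apply hn
    have h1 : (Z \ S).image g = Z \ S := by
      rw [image_congr' (g := f) (fun x hx => hfgZ x (Finset.mem_sdiff.1 hx).1)]
      exact image_sdiff' hZf hS
    by_cases hp : g^[m] a ∈ Z \ S
    · exact absurd hxS (Finset.mem_sdiff.1 (Orb_sub h1 hp hx)).2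
    · have := Orb_sub_or_disj hm h1 hp
      rw [← hZ] at this
      rw [← Finset.sdiff_eq_empty_iff_subset]
      exact Finset.disjoint_self_iff_empty _ |>.1 (this.mono_right Finset.sdiff_subset)
  rw [F]
  refine Finset.sum_involution (fun S _ => if Z ⊆ S then S \ Z else S ∪ Z) ?_ ?_ ?_ ?_
  · intro S hS
    obtain ⟨h1, h2, h3⟩ := (Finset.mem_filter.1 hS).2
    try dsimp only
    split_ifs with h
    · have := W_union (image_sdiff' h2 hZf) hZf Finset.sdiff_disjoint
      rw [Finset.sdiff_union_of_subset h, hWZ] at this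
      rw [this]; ring
    · rw [W_union h2 hZf (hdich S h2 h), hWZ]; ring
  · intro S hS _
    try dsimp only
    split_ifs with h
    · intro he
      rw [← he] at h
      exact (Finset.mem_sdiff.1 (h hz)).2 hz
    · intro he
      exact h (by rw [← he]; exact Finset.subset_union_right)
  · intro S hS
    obtain ⟨h1, h2, h3⟩ := (Finset.mem_filter.1 hS).2
    rw [Finset.mem_filter]
    refine ⟨Finset.mem_univ _, ?_⟩
    split_ifs with h
    · exact ⟨Finset.mem_sdiff.2 ⟨h1, haZ⟩, image_sdiff' h2 hZf,
        fun x hx y hy => h3 x (Finset.mem_sdiff.1 hx).1 y (Finset.mem_sdiff.1 hy).1⟩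
    · refine ⟨Finset.mem_union_left _ h1, image_union' h2 hZf, ?_⟩
      have := Cl_union hs hgg hfg h1 h2 h3
      intro x hx y hy
      exact this x (Finset.union_subset_union_right hZsub hx)
        y (Finset.union_subset_union_right hZsub hy)
  · intro S hS
    obtain ⟨h1, h2, h3⟩ := (Finset.mem_filter.1 hS).2
    by_cases h : Z ⊆ S
    · have : ¬ Z ⊆ S \ Z := fun h' => (Finset.mem_sdiff.1 (h' hz)).2 hz
      simp only [h, this, if_true, if_false]
      exact Finset.sdiff_union_of_subset h
    · simp only [h, Finset.subset_union_right, if_true, if_false]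
      exact Finset.union_sdiff_cancel_right (hdich S h2 h)

theorem swap_facts {R : X → X → Prop} (hs : ∀ x y, R x y → R y x) {f g : X → X}
    (hgg : ∀ x y, R x y → R (g x) (g y)) (hfg : ∀ x y, R x y → R (f x) (g y))
    {a : X} (heq : ∀ x, x ≠ a → f x = g x) (haf : a ∈ Function.periodicPts f)
    (hag : a ∈ Function.periodicPts g) {S : Finset X} (hS : P R a f S) :
    P R a g ((S \ Orb f a) ∪ Orb g a) ∧
    (((S \ Orb f a) ∪ Orb g a) \ Orb g a) ∪ Orb f a = S ∧
    W f S = W g ((S \ Orb f a) ∪ Orb g a) := by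
  obtain ⟨h1, h2, h3⟩ := hS
  have hTf := image_sdiff' h2 (image_Orb haf)
  have hcong : ∀ x ∈ S \ Orb f a, f x = g x := by
    intro x hx
    apply heq
    rintro rfl
    exact (Finset.mem_sdiff.1 hx).2 (self_mem_Orb _ _)
  have hTg : (S \ Orb f a).image g = S \ Orb f a := by rw [← image_congr' hcong, hTf]
  have haT : a ∉ S \ Orb f a := fun h => (Finset.mem_sdiff.1 h).2 (self_mem_Orb _ _)
  have hd := Orb_sub_or_disj hag hTg haT
  have hsub := Orb_sub h2 h1
  refine ⟨⟨Finset.mem_union_right _ (self_mem_Orb _ _), image_union' hTg (image_Orb hag), ?_⟩,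
    ?_, ?_⟩
  · have := Cl_union hs hgg hfg h1 h2 h3
    intro x hx y hy
    exact this x (Finset.union_subset_union_left Finset.sdiff_subset hx)
        y (Finset.union_subset_union_left Finset.sdiff_subset hy)
  · rw [Finset.union_sdiff_cancel_right hd, Finset.sdiff_union_of_subset hsub]
  · have := W_union hTf (image_Orb haf) Finset.sdiff_disjoint
    rw [Finset.sdiff_union_of_subset hsub] at this
    rw [this, W_union hTg (image_Orb hag) hd, W_Orb haf, W_Orb hag, W_congr hTf hcong]

theorem F_eq {R : X → X → Prop} (hs : ∀ x y, R x y → R y x) {f g : X → X}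
    (hff : ∀ x y, R x y → R (f x) (f y))
    (hgg : ∀ x y, R x y → R (g x) (g y)) (hfg : ∀ x y, R x y → R (f x) (g y))
    {a : X} (heq : ∀ x, x ≠ a → f x = g x) : F R a f = F R a g := by
  classical
  have hgf : ∀ x y, R x y → R (g x) (f y) := fun x y h => hs _ _ (hfg _ _ (hs _ _ h))
  have heq' : ∀ x, x ≠ a → g x = f x := fun x h => (heq x h).symm
  by_cases hag : a ∈ Function.periodicPts g
  · by_cases haf : a ∈ Function.periodicPts f
    · rw [F, F]
      refine Finset.sum_bij' (fun S _ => (S \ Orb f a) ∪ Orb g a)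
        (fun S _ => (S \ Orb g a) ∪ Orb f a) ?_ ?_ ?_ ?_ ?_
      · intro S hS
        exact Finset.mem_filter.2 ⟨Finset.mem_univ _,
          (swap_facts hs hgg hfg heq haf hag (Finset.mem_filter.1 hS).2).1⟩
      · intro S hS
        exact Finset.mem_filter.2 ⟨Finset.mem_univ _,
          (swap_facts hs hff hgf heq' hag haf (Finset.mem_filter.1 hS).2).1⟩
      · intro S hS
        exact (swap_facts hs hgg hfg heq haf hag (Finset.mem_filter.1 hS).2).2.1
      · intro S hS
        exact (swap_facts hs hff hgf heq' hag haf (Finset.mem_filter.1 hS).2).2.1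
      · intro S hS
        exact (swap_facts hs hgg hfg heq haf hag (Finset.mem_filter.1 hS).2).2.2
    · rw [F_zero haf, F_zero' hs hff hgf heq' haf]
  · rw [F_zero hag, F_zero' hs hgg hfg heq hag]

def RR (κ : X → X → Prop) (x y : X) : Prop := x = y ∨ κ x y

open Classical in
theorem simpLef_eq (κ : X → X → Prop) (a : X) (f : X → X) :
    simpLef κ f = -(F (RR κ) a f + ∑ S : Finset X,
      if a ∉ S ∧ S.Nonempty ∧ S.image f = S ∧ Cl (RR κ) S then W f S else 0) := by
  rw [F, Finset.sum_filter, ← Finset.sum_add_distrib, ← Finset.sum_neg_distrib, simpLef]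
  refine Finset.sum_congr rfl fun S _ => ?_
  have hcl : IsClique κ S ↔ S.Nonempty ∧ Cl (RR κ) S := by
    unfold IsClique Cl RR
    refine and_congr_right fun _ => forall_congr' fun x => forall_congr' fun _ =>
      forall_congr' fun y => forall_congr' fun _ => ?_
    tauto
  by_cases h : IsClique κ S ∧ S.image f = S
  · rw [dif_pos h]
    obtain ⟨h1, h2⟩ := hcl.1 h.1
    have hW : (-1 : ℤ) ^ (S.card - 1) * ((Equiv.Perm.sign (fixedSetPerm f S h.2) : ℤˣ) : ℤ)
        = - W f S := by
      rw [W, ep, dif_pos h.2, Equiv.Perm.sign_ofSubtype]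
      obtain ⟨n, hn⟩ := Nat.exists_eq_succ_of_ne_zero (Finset.card_pos.2 h1).ne'
      rw [hn, Nat.succ_sub_one, pow_succ]
      ring
    rw [hW]
    by_cases ha : a ∈ S
    · simp [P, ha, h.2, h2]
    · simp [P, ha, h.2, h2, h1]
  · rw [dif_neg h, if_neg, if_neg]
    · simp
    · rintro ⟨_, h1, h2, h3⟩; exact h ⟨hcl.2 ⟨h1, h3⟩, h2⟩
    · rintro ⟨h1, h2, h3⟩; exact h ⟨hcl.2 ⟨⟨a, h1⟩, h3⟩, h2⟩

theorem simpLef_one {κ : X → X → Prop} (hs : ∀ x y, RR κ x y → RR κ y x) {f g : X → X}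
    (hff : ∀ x y, RR κ x y → RR κ (f x) (f y))
    (hgg : ∀ x y, RR κ x y → RR κ (g x) (g y)) (hfg : ∀ x y, RR κ x y → RR κ (f x) (g y))
    {a : X} (heq : ∀ x, x ≠ a → f x = g x) : simpLef κ f = simpLef κ g := by
  classical
  rw [simpLef_eq κ a f, simpLef_eq κ a g, F_eq hs hff hgg hfg heq]
  congr 2
  refine Finset.sum_congr rfl fun S _ => ?_
  by_cases ha : a ∈ S
  · simp [ha]
  · have hc : ∀ x ∈ S, f x = g x := fun x hx => heq x (fun h => ha (h ▸ hx))
    rw [← image_congr' hc]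
    by_cases hS : S.image f = S
    · rw [W_congr hS hc]
    · simp [hS]

theorem simpLef_step {κ : X → X → Prop} (hs : ∀ x y, RR κ x y → RR κ y x) {f g : X → X}
    (hff : ∀ x y, RR κ x y → RR κ (f x) (f y))
    (hgg : ∀ x y, RR κ x y → RR κ (g x) (g y)) (hfg : ∀ x y, RR κ x y → RR κ (f x) (g y)) :
    simpLef κ f = simpLef κ g := by
  have hgf : ∀ x y, RR κ x y → RR κ (g x) (f y) := fun x y h => hs _ _ (hfg _ _ (hs _ _ h))
  have hAB : ∀ (A B : Finset X) (x y : X), RR κ x y →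
      RR κ (A.piecewise g f x) (B.piecewise g f y) := by
    intro A B x y h
    unfold Finset.piecewise
    split_ifs
    · exact hgg _ _ h
    · exact hgf _ _ h
    · exact hfg _ _ h
    · exact hff _ _ h
  have : ∀ A : Finset X, simpLef κ f = simpLef κ (A.piecewise g f) := by
    intro A
    induction A using Finset.induction_on with
    | empty => rw [Finset.piecewise_empty]
    | insert a A ha ih =>
      rw [ih]
      refine simpLef_one hs (hAB _ _) (hAB _ _) (hAB _ _) (a := a) ?_
      intro x hx
      simp [Finset.piecewise, hx]
  rw [this Finset.univ, Finset.piecewise_univ]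

theorem simpLef_homotopic {κ : X → X → Prop} (hsym : ∀ x y, κ x y → κ y x)
    {f g : X → X} (h : StrongHomotopic κ κ f g) : simpLef κ f = simpLef κ g := by
  obtain ⟨m, H, h0, hm, hH⟩ := h
  have hs : ∀ x y, RR κ x y → RR κ y x := by
    rintro x y (h | h)
    · exact Or.inl h.symm
    · exact Or.inr (hsym _ _ h)
  have hH' : ∀ x x' (t t' : ℕ), t ≤ m → t' ≤ m → RR κ x x' →
      (t = t' ∨ t + 1 = t' ∨ t' + 1 = t) → RR κ (H x t) (H x' t') := by
    intro x x' t t' ht ht' hx htt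
    by_cases hne : x = x' ∧ t = t'
    · rw [hne.1, hne.2]; exact Or.inl rfl
    · exact hH x x' t t' ht ht' hx htt (by tauto)
  have : ∀ t ≤ m, simpLef κ f = simpLef κ (fun x => H x t) := by
    intro t
    induction t with
    | zero => intro _; congr 1; ext x; exact (h0 x).symm
    | succ t ih =>
      intro ht
      rw [ih (by omega)]
      refine simpLef_step hs ?_ ?_ ?_
      · intro x y h; exact hH' _ _ _ _ (by omega) (by omega) h (Or.inl rfl)
      · intro x y h; exact hH' _ _ _ _ (by omega) (by omega) h (Or.inl rfl)
      · intro x y h; exact hH' _ _ _ _ (by omega) (by omega) h (Or.inr (Or.inl rfl))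
  rw [this m le_rfl]
  congr 1
  ext x
  exact hm x

end DLef

/-- Let `(X,κ)` be a finite digital image and `f : X → X` a continuous self-map with
`L(f) ≠ 0`. Then every continuous self-map `g : X → X` strongly homotopic to `f` has a
fixed point or has at least two distinct approximate fixed points. -/
theorem strongHomotopic_fixed_or_approx_of_simpLef_ne_zero
    {X : Type*} [Fintype X] [DecidableEq X]
    (κ : X → X → Prop) (hsym : Symmetric κ) (hirr : Irreflexive κ)
    (f : X → X) (hf : DigCont κ κ f) (hL : simpLef κ f ≠ 0) :
    ∀ g : X → X, DigCont κ κ g → StrongHomotopic κ κ f g →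
      (∃ x, g x = x) ∨ ∃ x y, x ≠ y ∧ ApproxFix κ g x ∧ ApproxFix κ g y := by
  intro g hg hfg
  classical
  rw [DLef.simpLef_homotopic (fun x y h => hsym h) hfg, simpLef] at hL
  obtain ⟨S, _, hS⟩ := Finset.exists_ne_zero_of_sum_ne_zero hL
  by_cases h : IsClique κ S ∧ S.image g = S
  · obtain ⟨⟨⟨x, hx⟩, hc⟩, hi⟩ := h
    by_cases hfx : g x = x
    · exact Or.inl ⟨x, hfx⟩
    · right
      have ap : ∀ y ∈ S, ApproxFix κ g y := by
        intro y hy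
        by_cases hy' : g y = y
        · exact Or.inl hy'
        · exact Or.inr (hc y hy _ (DLef.mem_map hi hy) (Ne.symm hy'))
      exact ⟨x, g x, Ne.symm hfx, ap x hx, ap _ (DLef.mem_map hi hx)⟩
  · rw [dif_neg h] at hS
    exact absurd rfl hS
end

section
/- Let (X,κ) be a finite digital image whose simplicial Euler characteristic χ(X) is nonzero, and let f : X → X be a continuous self-map strongly homotopic to the identity map of X. Then f has a fixed point or f has at least two distinct approximate fixed points. -/
open Classical in
def HasChi {P : Type*} [Fintype P] [PartialOrder P] (Q : Set P) (n : ℤ) : Prop :=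
  ∃ k : P → ℤ, (∀ y, y ∉ Q → k y = 0) ∧
    (∀ x ∈ Q, ∑ y, (if y ≤ x then k y else 0) = 1) ∧ ∑ y, k y = n

open Classical in
theorem sum_shift {P : Type*} [Fintype P] [PartialOrder P] (k : P → ℤ) (c : ℤ) (x w t : P) :
    ∑ y, (if y ≤ t then (k y + (if y = x then c else 0) - (if y = w then c else 0)) else 0) =
    ∑ y, (if y ≤ t then k y else 0) + (if x ≤ t then c else 0) - (if w ≤ t then c else 0) := by
  have h : ∀ y, (if y ≤ t then (k y + (if y = x then c else 0) - (if y = w then c else 0)) else 0)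
      = (if y ≤ t then k y else 0) + (if y = x then (if x ≤ t then c else 0) else 0)
        - (if y = w then (if w ≤ t then c else 0) else 0) := by
    intro y
    by_cases h1 : y = x <;> by_cases h2 : y = w <;> by_cases h3 : y ≤ t <;> grind
  rw [Finset.sum_congr rfl (fun y _ => h y), Finset.sum_sub_distrib, Finset.sum_add_distrib]
  simp

open Classical in
theorem sum_shift' {P : Type*} [Fintype P] (k : P → ℤ) (c : ℤ) (x w : P) :
    ∑ y, (k y + (if y = x then c else 0) - (if y = w then c else 0)) = ∑ y, k y := by
  rw [Finset.sum_sub_distrib, Finset.sum_add_distrib]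
  simp

theorem hasChi_up {P : Type*} [Fintype P] [PartialOrder P] (R : Set P) (x w : P) (hx : x ∉ R)
    (hw : w ∈ R) (hxw : x < w) (hmin : ∀ y ∈ R, x < y → w ≤ y) (n : ℤ) :
    HasChi R n ↔ HasChi (insert x R) n := by
  classical
  have key : ∀ t ∈ R, (x ≤ t ↔ w ≤ t) := by
    intro t ht
    constructor
    · intro h
      exact hmin t ht (lt_of_le_of_ne h (by rintro rfl; exact hx ht))
    · intro h
      exact hxw.le.trans h
  constructor
  · rintro ⟨k, h0, h1, h2⟩
    set c : ℤ := 1 - ∑ y, (if y ≤ x then k y else 0) with hc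
    refine ⟨fun y => k y + (if y = x then c else 0) - (if y = w then c else 0), ?_, ?_, ?_⟩
    · intro y hy
      have hyx : y ≠ x := by rintro rfl; exact hy (Set.mem_insert _ _)
      have hyR : y ∉ R := fun h => hy (Set.mem_insert_of_mem _ h)
      have hyw : y ≠ w := by rintro rfl; exact hyR hw
      simp [hyx, hyw, h0 y hyR]
    · intro t ht
      have e := sum_shift k c x w t
      rcases ht with rfl | ht
      · have := hxw.not_ge
        rw [if_pos le_rfl, if_neg this] at e
        linarith
      · have e1 := h1 t ht
        have e2 := key t ht
        simp only [e2] at e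
        linarith
    · have := sum_shift' k c x w
      linarith
  · rintro ⟨k, h0, h1, h2⟩
    refine ⟨fun y => k y + (if y = x then (-k x) else 0) - (if y = w then (-k x) else 0),
      ?_, ?_, ?_⟩
    · intro y hy
      have hyw : y ≠ w := by rintro rfl; exact hy hw
      by_cases hyx : y = x
      · subst hyx; simp [hyw]
      · have : y ∉ insert x R := by
          rintro (h | h)
          · exact hyx h
          · exact hy h
        simp [hyx, hyw, h0 y this]
    · intro t ht
      have e := sum_shift k (-k x) x w t
      have e1 := h1 t (Set.mem_insert_of_mem _ ht)
      have e2 := key t ht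
      simp only [e2] at e
      linarith
    · have := sum_shift' k (-k x) x w
      linarith

theorem hasChi_down {P : Type*} [Fintype P] [PartialOrder P] (R : Set P) (x u : P) (hx : x ∉ R)
    (hu : u ∈ R) (hux : u < x) (hmax : ∀ y ∈ R, y < x → y ≤ u) (n : ℤ) :
    HasChi R n ↔ HasChi (insert x R) n := by
  classical
  have key : ∀ k : P → ℤ, (∀ y, y ∉ insert x R → k y = 0) →
      ∑ y, (if y ≤ x then k y else 0) = ∑ y, (if y ≤ u then k y else 0) + k x := by
    intro k hk
    have : k x = ∑ y, if y = x then k y else 0 := by simp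
    rw [this, ← Finset.sum_add_distrib]
    refine Finset.sum_congr rfl fun y _ => ?_
    by_cases hyx : y = x
    · subst hyx; simp [hux.not_ge]
    · by_cases hy : y ∈ R
      · have : y ≤ x ↔ y ≤ u :=
          ⟨fun h => hmax y hy (lt_of_le_of_ne h hyx), fun h => h.trans hux.le⟩
        simp [this, hyx]
      · have : k y = 0 := hk y (by rintro (h | h); exacts [hyx h, hy h])
        simp [this]
  constructor
  · rintro ⟨k, h0, h1, h2⟩
    have h0' : ∀ y, y ∉ insert x R → k y = 0 := fun y hy => h0 y fun h => hy (Or.inr h)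
    refine ⟨k, h0', ?_, h2⟩
    rintro t (rfl | ht)
    · rw [key k h0', h0 _ hx, h1 u hu]; rfl
    · exact h1 t ht
  · rintro ⟨k, h0, h1, h2⟩
    refine ⟨k, ?_, fun t ht => h1 t (Or.inr ht), h2⟩
    intro y hy
    by_cases hyx : y = x
    · subst hyx
      have a := key k h0
      rw [h1 y (Or.inl rfl), h1 u (Or.inr hu)] at a
      linarith
    · exact h0 y (by rintro (h | h); exacts [hyx h, hy h])

theorem exists_fix_above {P : Type*} [Finite P] [PartialOrder P] (φ : P → P) (hφ : Monotone φ)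
    (z : P) (hz : z ≤ φ z) :
    ∃ w, φ w = w ∧ z ≤ w ∧ ∀ y, φ y = y → z ≤ y → w ≤ y := by
  induction z using WellFoundedGT.induction with
  | ind z ih =>
    by_cases h : φ z = z
    · exact ⟨z, h, le_rfl, fun y _ h => h⟩
    · obtain ⟨w, h1, h2, h3⟩ := ih (φ z) (lt_of_le_of_ne hz (Ne.symm h)) (hφ hz)
      exact ⟨w, h1, hz.trans h2, fun y hy hzy => h3 y hy (by rw [← hy]; exact hφ hzy)⟩

theorem exists_fix_below {P : Type*} [Finite P] [PartialOrder P] (φ : P → P) (hφ : Monotone φ)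
    (z : P) (hz : φ z ≤ z) :
    ∃ w, φ w = w ∧ w ≤ z ∧ ∀ y, φ y = y → y ≤ z → y ≤ w := by
  induction z using WellFoundedLT.induction with
  | ind z ih =>
    by_cases h : φ z = z
    · exact ⟨z, h, le_rfl, fun y _ h => h⟩
    · obtain ⟨w, h1, h2, h3⟩ := ih (φ z) (lt_of_le_of_ne hz h) (hφ hz)
      exact ⟨w, h1, h2.trans hz, fun y hy hzy => h3 y hy (by rw [← hy]; exact hφ hzy)⟩

theorem hasChi_step {P : Type*} [Fintype P] [PartialOrder P] (φ ψ : P → P) (hφ : Monotone φ)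
    (hψ : Monotone ψ) (x : P) (hlt : φ x < ψ x) (heq : ∀ y, y ≠ x → φ y = ψ y) (n : ℤ) :
    HasChi {y | φ y = y} n ↔ HasChi {y | ψ y = y} n := by
  by_cases h1 : φ x = x
  · rw [h1] at hlt
    have e : {y | φ y = y} = insert x {y | ψ y = y} := by
      ext y
      by_cases hy : y = x
      · subst hy; simp [h1]
      · simp [hy, heq y hy]
    obtain ⟨w, a, b, c⟩ := exists_fix_above ψ hψ (ψ x) (hψ hlt.le)
    rw [e, ← hasChi_up {y | ψ y = y} x w (by simpa using hlt.ne') a (hlt.trans_le b)]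
    intro y hy hxy
    exact c y hy (by have := hψ hxy.le; rwa [show ψ y = y from hy] at this)
  · by_cases h2 : ψ x = x
    · rw [h2] at hlt
      have e : {y | ψ y = y} = insert x {y | φ y = y} := by
        ext y
        by_cases hy : y = x
        · subst hy; simp [h2]
        · simp [hy, heq y hy]
      obtain ⟨w, a, b, c⟩ := exists_fix_below φ hφ (φ x) (hφ hlt.le)
      rw [e, ← hasChi_down {y | φ y = y} x w (by simpa using h1) a
        (lt_of_le_of_lt b hlt)]
      intro y hy hxy
      exact c y hy
        (show y ≤ φ x by have := hφ hxy.le; rwa [show φ y = y from hy] at this)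
    · have e : {y | φ y = y} = {y | ψ y = y} := by
        ext y
        by_cases hy : y = x
        · subst hy; simp [h1, h2]
        · simp [heq y hy]
      rw [e]

theorem hasChi_le {P : Type*} [Fintype P] [PartialOrder P] (n : ℤ) (ψ : P → P) (hψ : Monotone ψ) :
    ∀ (N : ℕ) (φ : P → P), Monotone φ → (∀ x, φ x ≤ ψ x) → {x | φ x ≠ ψ x}.ncard = N →
    (HasChi {y | φ y = y} n ↔ HasChi {y | ψ y = y} n) := by
  classical
  intro N
  induction N with
  | zero =>
    intro φ hφ hle h
    rw [Set.ncard_eq_zero] at h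
    have : φ = ψ := by
      funext x
      by_contra hx
      have : x ∈ {x | φ x ≠ ψ x} := hx
      rw [h] at this
      exact this
    rw [this]
  | succ N ih =>
    intro φ hφ hle h
    have hne : {x | φ x ≠ ψ x}.Nonempty := by
      rw [← Set.ncard_pos]; omega
    obtain ⟨x, hx⟩ := (Set.toFinite {x | φ x ≠ ψ x}).exists_maximal hne
    have hxne : φ x ≠ ψ x := hx.1
    have hab : ∀ y, x < y → φ y = ψ y := by
      intro y hy
      by_contra hc
      exact hy.not_ge (hx.2 hc hy.le)
    have hm : Monotone (Function.update φ x (ψ x)) := by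
      intro a b hab'
      by_cases ha : a = x
      · subst ha
        by_cases hb : b = a
        · subst hb; exact le_rfl
        · rw [Function.update_self, Function.update_of_ne hb,
            hab b (lt_of_le_of_ne hab' (Ne.symm hb))]
          exact hψ hab'
      · by_cases hb : b = x
        · subst hb
          rw [Function.update_self, Function.update_of_ne ha]
          exact (hφ hab').trans (hle _)
        · rw [Function.update_of_ne hb, Function.update_of_ne ha]
          exact hφ hab'
    rw [hasChi_step φ (Function.update φ x (ψ x)) hφ hm x
      (by rw [Function.update_self]; exact lt_of_le_of_ne (hle x) hxne)
      (fun y hy => by rw [Function.update_of_ne hy])]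
    apply ih _ hm
    · intro y
      by_cases hy : y = x
      · subst hy; simp
      · rw [Function.update_of_ne hy]; exact hle y
    · have e : {y | Function.update φ x (ψ x) y ≠ ψ y} = {y | φ y ≠ ψ y} \ {x} := by
        ext y
        by_cases hy : y = x
        · subst hy; simp
        · simp [hy]
      rw [e, Set.ncard_diff_singleton_of_mem hxne, h]
      rfl

theorem clique_img {X : Type*} [DecidableEq X] (κ : X → X → Prop) (g h : X → X)
    (H : ∀ x x', (x = x' ∨ κ x x') → (g x = h x' ∨ κ (g x) (h x')) ∧ (h x = g x' ∨ κ (h x) (g x')) ∧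
      (g x = g x' ∨ κ (g x) (g x')) ∧ (h x = h x' ∨ κ (h x) (h x')))
    (S : Finset X) (hS : IsClique κ S) : IsClique κ (S.image g ∪ S.image h) := by
  refine ⟨(hS.1.image g).mono Finset.subset_union_left, ?_⟩
  have hS' : ∀ x ∈ S, ∀ y ∈ S, x = y ∨ κ x y := fun x hx y hy =>
    (em (x = y)).imp id (hS.2 x hx y hy)
  intro a ha b hb hab
  simp only [Finset.mem_union, Finset.mem_image] at ha hb
  rcases ha with ⟨x, hx, rfl⟩ | ⟨x, hx, rfl⟩ <;> rcases hb with ⟨y, hy, rfl⟩ | ⟨y, hy, rfl⟩ <;>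
  · have := H x y (hS' x hx y hy)
    tauto

def cmap {X : Type*} [DecidableEq X] (κ : X → X → Prop) (g h : X → X)
    (H : ∀ S, IsClique κ S → IsClique κ (S.image g ∪ S.image h)) :
    {S : Finset X // IsClique κ S} → {S : Finset X // IsClique κ S} :=
  fun S => ⟨S.1.image g ∪ S.1.image h, H S.1 S.2⟩

theorem cmap_mono {X : Type*} [DecidableEq X] (κ : X → X → Prop) (g h : X → X)
    (H : ∀ S, IsClique κ S → IsClique κ (S.image g ∪ S.image h)) : Monotone (cmap κ g h H) := by
  intro S T hST
  exact Finset.union_subset_union (Finset.image_subset_image hST) (Finset.image_subset_image hST)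

open Classical in
theorem hasChi_univ {X : Type*} [Fintype X] (κ : X → X → Prop) :
    HasChi (Set.univ : Set {S : Finset X // IsClique κ S}) (simpEuler κ) := by
  refine ⟨fun S => (-1) ^ (S.1.card - 1), by simp, ?_, ?_⟩
  · rintro ⟨S, hS⟩ -
    have h1 : ∑ y : {S : Finset X // IsClique κ S},
        (if y ≤ ⟨S, hS⟩ then (-1 : ℤ) ^ (y.1.card - 1) else 0)
        = ∑ T ∈ S.powerset.erase ∅, (-1 : ℤ) ^ (T.card - 1) := by
      rw [← Finset.sum_filter]
      refine Finset.sum_bij (fun y _ => y.1) ?_ ?_ ?_ ?_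
      · intro a ha
        simp only [Finset.mem_filter, Finset.mem_univ, true_and] at ha
        simp only [Finset.mem_erase, Finset.mem_powerset]
        exact ⟨a.2.1.ne_empty, ha⟩
      · intro a _ b _ h
        exact Subtype.ext h
      · intro T hT
        simp only [Finset.mem_erase, Finset.mem_powerset] at hT
        refine ⟨⟨T, Finset.nonempty_iff_ne_empty.2 hT.1, fun x hx y hy =>
          hS.2 x (hT.2 hx) y (hT.2 hy)⟩, ?_, rfl⟩
        simp only [Finset.mem_filter, Finset.mem_univ, true_and]
        exact hT.2
      · intro a _
        rfl
    have h2 : ∑ T ∈ S.powerset.erase ∅, (-1 : ℤ) ^ (T.card - 1)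
        = - ∑ T ∈ S.powerset.erase ∅, (-1 : ℤ) ^ T.card := by
      rw [← Finset.sum_neg_distrib]
      refine Finset.sum_congr rfl fun T hT => ?_
      have : 0 < T.card := Finset.card_pos.2 (Finset.nonempty_iff_ne_empty.2 (Finset.ne_of_mem_erase hT))
      obtain ⟨m, hm⟩ := Nat.exists_eq_add_of_lt this
      rw [hm]
      simp [pow_succ]
    have h3 := Finset.sum_powerset_neg_one_pow_card_of_nonempty hS.1
    have h4 := Finset.add_sum_erase S.powerset (fun T => (-1 : ℤ) ^ T.card) (Finset.empty_mem_powerset S)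
    simp only [Finset.card_empty, pow_zero] at h4
    have h5 := h1.trans h2
    have h6 : -∑ T ∈ S.powerset.erase ∅, (-1 : ℤ) ^ T.card = 1 := by linarith
    rw [h6] at h5
    convert h5
  · unfold simpEuler
    rw [← Finset.sum_filter]
    exact (Finset.sum_subtype (Finset.univ.filter (fun S => IsClique κ S)) (by simp)
      (fun S => (-1 : ℤ) ^ (S.card - 1))).symm

/-- Let `(X,κ)` be a finite digital image whose simplicial Euler characteristic `χ(X)` is
nonzero, and let `f : X → X` be a continuous self-map strongly homotopic to the identity.
Then `f` has a fixed point or at least two distinct approximate fixed points. -/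
theorem fixed_or_approx_of_strongHomotopic_id {X : Type*} [Fintype X] [DecidableEq X]
    (κ : X → X → Prop) (hsym : Symmetric κ) (hirr : Irreflexive κ)
    (hχ : simpEuler κ ≠ 0)
    (f : X → X) (hf : DigCont κ κ f) (hfid : StrongHomotopic κ κ f id) :
    (∃ x, f x = x) ∨ ∃ x y, x ≠ y ∧ ApproxFix κ f x ∧ ApproxFix κ f y := by
  classical
  obtain ⟨m, H, H0, Hm, HH⟩ := hfid
  have hz : ∀ t ≤ m, ∀ x x', (x = x' ∨ κ x x') → (H x t = H x' t ∨ κ (H x t) (H x' t)) := by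
    intro t ht x x' hx
    by_cases e : x = x'
    · subst e; exact Or.inl rfl
    · exact HH x x' t t ht ht hx (Or.inl rfl) (Or.inl e)
  have c1 : ∀ t ≤ m, ∀ S, IsClique κ S →
      IsClique κ (S.image (fun x => H x t) ∪ S.image (fun x => H x t)) := by
    intro t ht
    refine clique_img κ _ _ fun x x' hx => ?_
    have := hz t ht x x' hx
    exact ⟨this, this, this, this⟩
  have c2 : ∀ t, t + 1 ≤ m → ∀ S, IsClique κ S →
      IsClique κ (S.image (fun x => H x t) ∪ S.image (fun x => H x (t + 1))) := by
    intro t ht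
    refine clique_img κ _ _ fun x x' hx => ⟨?_, ?_, hz t (by omega) x x' hx, hz _ ht x x' hx⟩
    · exact HH x x' t (t + 1) (by omega) ht hx (by omega) (Or.inr (by omega))
    · exact HH x x' (t + 1) t ht (by omega) hx (by omega) (Or.inr (by omega))
  have main : ∀ t (ht : t ≤ m), HasChi {S | cmap κ _ _ (c1 t ht) S = S} (simpEuler κ) →
      HasChi {S | cmap κ _ _ (c1 0 (Nat.zero_le m)) S = S} (simpEuler κ) := by
    intro t
    induction t with
    | zero => intro _ h; exact h
    | succ t ih =>
      intro ht h
      apply ih (by omega)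
      rw [hasChi_le _ (cmap κ _ _ (c2 t ht)) (cmap_mono _ _ _ _) _ _ (cmap_mono _ _ _ _) ?_ rfl]
      · rw [← hasChi_le _ (cmap κ _ _ (c2 t ht)) (cmap_mono _ _ _ _) _ _
          (cmap_mono _ _ _ (c1 (t + 1) ht)) ?_ rfl]
        · exact h
        · intro S
          exact Finset.union_subset Finset.subset_union_right Finset.subset_union_right
      · intro S
        exact Finset.union_subset Finset.subset_union_left Finset.subset_union_left
  have hend : {S | cmap κ _ _ (c1 m le_rfl) S = S} = Set.univ := by
    ext S
    simp only [Set.mem_setOf_eq, Set.mem_univ, iff_true]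
    apply Subtype.ext
    simp [cmap, Hm]
  have h := main m le_rfl (by rw [hend]; exact hasChi_univ κ)
  have hne : {S | cmap κ _ _ (c1 0 (Nat.zero_le m)) S = S}.Nonempty := by
    by_contra hc
    rw [Set.not_nonempty_iff_eq_empty] at hc
    rw [hc] at h
    obtain ⟨k, k0, -, k2⟩ := h
    apply hχ
    rw [← k2]
    exact Finset.sum_eq_zero fun y _ => k0 y (by simp)
  obtain ⟨⟨S, hS⟩, hfix⟩ := hne
  have hfS : S.image f = S := by
    have := congrArg Subtype.val hfix
    simpa [cmap, H0] using this
  have hA : ∀ x ∈ S, ApproxFix κ f x := by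
    intro x hx
    have hfx : f x ∈ S := by
      have := Finset.mem_image_of_mem f hx
      rwa [hfS] at this
    by_cases e : f x = x
    · exact Or.inl e
    · exact Or.inr (hS.2 x hx _ hfx (Ne.symm e))
  obtain ⟨x, hx⟩ := hS.1
  by_cases e : f x = x
  · exact Or.inl ⟨x, e⟩
  · have hfx : f x ∈ S := by
      have := Finset.mem_image_of_mem f hx
      rwa [hfS] at this
    exact Or.inr ⟨x, f x, Ne.symm e, hA x hx, hA _ hfx⟩
end

section
/- Let (X,κ) be a finite strongly contractible digital image. Then every continuous self-map f : X → X has a fixed point or has at least two distinct approximate fixed points. -/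
/-- `(X,κ)` is strongly contractible: the identity map is strongly homotopic to a constant
map. -/
def StronglyContractible {X : Type*} (κ : X → X → Prop) : Prop :=
  ∃ x₀ : X, StrongHomotopic κ κ id (fun _ => x₀)

/-- Let `(X,κ)` be a finite strongly contractible digital image. Then every continuous
self-map `f : X → X` has a fixed point or at least two distinct approximate fixed
points. -/
theorem fixed_or_approx_of_stronglyContractible {X : Type*} [Fintype X] [DecidableEq X]
    (κ : X → X → Prop) (hsym : Symmetric κ) (hirr : Irreflexive κ)
    (hX : StronglyContractible κ) :
    ∀ f : X → X, DigCont κ κ f →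
      (∃ x, f x = x) ∨ ∃ x y, x ≠ y ∧ ApproxFix κ f x ∧ ApproxFix κ f y := by
  intro f hf
  obtain ⟨x₀, m, H, h0, hm, hH⟩ := hX
  have key : ∀ k, k ≤ m → ∃ a, H (f a) (m - k) = a ∨ κ (H (f a) (m - k)) a := by
    intro k
    induction k with
    | zero => intro _; exact ⟨x₀, Or.inl (by simpa using hm (f x₀))⟩
    | succ k ih =>
      intro hk
      obtain ⟨a, ha⟩ := ih (by omega)
      refine ⟨H (f a) (m - k), ?_⟩
      refine hH _ _ (m - (k + 1)) (m - k) (by omega) (by omega) ?_ (by omega)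
        (Or.inr (by omega))
      rcases ha with ha | ha
      · left; rw [ha]
      · exact hf _ _ ha
  obtain ⟨a, ha⟩ := key m le_rfl
  rw [Nat.sub_self, h0] at ha
  rcases ha with ha | ha
  · exact Or.inl ⟨a, ha⟩
  · right
    have ha' : κ a (f a) := hsym ha
    refine ⟨a, f a, ?_, Or.inr ha', ?_⟩
    · intro h
      rw [← h] at ha'
      exact hirr a ha'
    · rcases hf _ _ ha' with h | h
      · exact Or.inl h.symm
      · exact Or.inr h
end

section
/- Let X ⊆ ℤ^n be a finite digital image with c1-adjacency, where n ≤ 3, and let f, g : X → X be c1-continuous self-maps that are homotopic (f ≃ g). Then L̄(f) = L̄(g). -/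
/-- `c1`-adjacency on `ℤ^n`: `x, y` are `c1`-adjacent iff `∑ i, |x i − y i| = 1`. -/
def c1Adj {n : ℕ} (x y : Fin n → ℤ) : Prop := (∑ i, |x i - y i|) = 1

/-- `f` is `c1`-continuous on the digital image `X ⊆ ℤ^n`: `c1`-adjacent points of `X` have
equal or `c1`-adjacent images. -/
def c1Cont {n m : ℕ} (X : Finset (Fin n → ℤ)) (f : (Fin n → ℤ) → (Fin m → ℤ)) : Prop :=
  ∀ x ∈ X, ∀ y ∈ X, c1Adj x y → f x = f y ∨ c1Adj (f x) (f y)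

/-- `f` maps the digital image `X` into the digital image `Y`. -/
def MapsInto {n m : ℕ} (X : Finset (Fin n → ℤ)) (Y : Finset (Fin m → ℤ))
    (f : (Fin n → ℤ) → (Fin m → ℤ)) : Prop :=
  ∀ x ∈ X, f x ∈ Y

/-- The elementary cube `σ = t_1 × ⋯ × t_n ⊆ ℤ^n` with minimal corner `a`, where
`t_i = {a i, a i + 1}` for `i ∈ D` (the nondegenerate directions, so `dim σ = D.card`)
and `t_i = {a i}` otherwise. -/
def eCube {n : ℕ} (a : Fin n → ℤ) (D : Finset (Fin n)) : Finset (Fin n → ℤ) :=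
  D.powerset.image (fun s i => a i + if i ∈ s then 1 else 0)

/-- A homotopy between continuous maps `f, g : X → Y` is `H : X × {0,…,k} → Y` with
`H(x,0) = f(x)`, `H(x,k) = g(x)`, sending consecutive stages of each point to equal or
adjacent points, and continuous at each stage; `f ≃ g` iff such an `H` exists. -/
def c1Homotopic {n m : ℕ} (X : Finset (Fin n → ℤ)) (Y : Finset (Fin m → ℤ))
    (f g : (Fin n → ℤ) → (Fin m → ℤ)) : Prop :=
  ∃ (k : ℕ) (H : (Fin n → ℤ) → ℕ → (Fin m → ℤ)),
    (∀ x ∈ X, ∀ t ≤ k, H x t ∈ Y) ∧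
    (∀ x ∈ X, H x 0 = f x) ∧ (∀ x ∈ X, H x k = g x) ∧
    (∀ x ∈ X, ∀ t, t + 1 ≤ k → (H x t = H x (t + 1) ∨ c1Adj (H x t) (H x (t + 1)))) ∧
    (∀ t ≤ k, ∀ x ∈ X, ∀ x' ∈ X, c1Adj x x' → (H x t = H x' t ∨ c1Adj (H x t) (H x' t)))

/-- `x` is a `k`-approximate fixed point of `f` on `X`: there is a `c1`-path in `X` from
`x` to `f x` of length at most `k`. -/
def nApproxFix {n : ℕ} (X : Finset (Fin n → ℤ)) (f : (Fin n → ℤ) → (Fin n → ℤ))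
    (k : ℕ) (x : Fin n → ℤ) : Prop :=
  ∃ (m : ℕ) (p : ℕ → (Fin n → ℤ)), m ≤ k ∧ p 0 = x ∧ p m = f x ∧
    (∀ t ≤ m, p t ∈ X) ∧
    (∀ t, t + 1 ≤ m → (p t = p (t + 1) ∨ c1Adj (p t) (p (t + 1))))

open Classical in
/-- `ε(f, σ)` for `σ = eCube a D` with `f(σ) = σ`: on the nondegenerate directions `D` of
`σ`, `f` is given by an affine map `x ↦ b + Mx` with `M` a signed permutation matrix
(a permutation `π` of `D` together with signs `s : D → {±1}`), and
`ε(f,σ) = det M = sgn(π) ⬝ ∏ s`. (Junk value `0` if `f` is not of this form on `σ`.) -/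
noncomputable def cubeSign {n : ℕ} (f : (Fin n → ℤ) → (Fin n → ℤ))
    (a : Fin n → ℤ) (D : Finset (Fin n)) : ℤ :=
  if h : ∃ p : Equiv.Perm {i // i ∈ D} × ({i // i ∈ D} → ℤ),
      (∀ i, p.2 i = 1 ∨ p.2 i = -1) ∧
      ∀ x ∈ eCube a D, ∀ i : {i // i ∈ D},
        f x (i : Fin n) = f a (i : Fin n) + p.2 i * (x ((p.1 i : Fin n)) - a ((p.1 i : Fin n)))
  then ((Equiv.Perm.sign h.choose.1 : ℤˣ) : ℤ) * ∏ i, h.choose.2 i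
  else 0

open Classical in
/-- The cubical Lefschetz number `L̄(f) = ∑_σ (−1)^{dim σ} ε(f,σ)`, summing over all
elementary cubes `σ ⊆ X` with `f(σ) = σ`. -/
noncomputable def cubLef {n : ℕ} (X : Finset (Fin n → ℤ))
    (f : (Fin n → ℤ) → (Fin n → ℤ)) : ℤ :=
  ∑ a ∈ X, ∑ D : Finset (Fin n),
    if eCube a D ⊆ X ∧ (eCube a D).image f = eCube a D then
      (-1 : ℤ) ^ D.card * cubeSign f a D
    else 0

open Classical in
/-- The cubical Euler characteristic `χ̄(X) = ∑_q (−1)^q k_q`, with `k_q` the number of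
elementary cubes of dimension `q` contained in `X`. -/
noncomputable def cubEuler {n : ℕ} (X : Finset (Fin n → ℤ)) : ℤ :=
  ∑ a ∈ X, ∑ D : Finset (Fin n),
    if eCube a D ⊆ X then (-1 : ℤ) ^ D.card else 0

namespace CL

def ee {m : ℕ} (k : Fin m) : Fin m → ℤ := Pi.single k 1

def sg {m : ℕ} (k : Fin m) (D : Finset (Fin m)) : ℤ := (-1) ^ (D.filter (· < k)).card

def cob {m : ℕ} (β : (Fin m → ℤ) → Finset (Fin m) → ℤ) (a : Fin m → ℤ) (D : Finset (Fin m)) : ℤ :=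
  ∑ k ∈ D, sg k D * (β (a + ee k) (D.erase k) - β a (D.erase k))

def cup {m : ℕ} (v : (Fin m → ℤ) → ℤ) (β : (Fin m → ℤ) → Finset (Fin m) → ℤ)
    (a : Fin m → ℤ) (D : Finset (Fin m)) : ℤ :=
  ∑ k ∈ D, sg k D * ((v (a + ee k) - v a) * β (a + ee k) (D.erase k))

def unitC {m : ℕ} (_a : Fin m → ℤ) (D : Finset (Fin m)) : ℤ := if D = ∅ then 1 else 0

def NN {m : ℕ} : List ((Fin m → ℤ) → ℤ) → (Fin m → ℤ) → Finset (Fin m) → ℤ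
  | [] => unitC
  | v :: L => cup v (NN L)

theorem sg_swap {m : ℕ} {D : Finset (Fin m)} {k l : Fin m} (hk : k ∈ D) (hl : l ∈ D)
    (h : k ≠ l) : sg k D * sg l (D.erase k) = -(sg l D * sg k (D.erase l)) := by
  have key : ∀ k l : Fin m, k ∈ D → l ∈ D → k < l →
      sg k D * sg l (D.erase k) = -(sg l D * sg k (D.erase l)) := by
    intro k l hk hl h
    have h1 : sg k (D.erase l) = sg k D := by
      unfold sg
      congr 2
      ext i
      simp only [Finset.mem_filter, Finset.mem_erase]
      constructor
      · tauto
      · rintro ⟨h1, h2⟩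
        exact ⟨⟨(h2.trans h).ne, h1⟩, h2⟩
    have h2 : sg l D = - sg l (D.erase k) := by
      unfold sg
      rw [Finset.filter_erase]
      have hm : k ∈ D.filter (· < l) := by simp [hk, h]
      rw [← Finset.card_erase_add_one hm, pow_succ]
      ring
    rw [h1, h2]; ring
  rcases lt_or_gt_of_ne h with h | h
  · exact key k l hk hl h
  · rw [key l k hl hk h]; ring

theorem sum_anti {m : ℕ} (D : Finset (Fin m)) (Φ : Fin m → Fin m → ℤ)
    (h : ∀ k ∈ D, ∀ l ∈ D, k ≠ l → Φ k l = Φ l k) :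
    ∑ k ∈ D, ∑ l ∈ D.erase k, sg k D * sg l (D.erase k) * Φ k l = 0 := by
  have h1 : ∑ k ∈ D, ∑ l ∈ D.erase k, sg k D * sg l (D.erase k) * Φ k l
      = ∑ l ∈ D, ∑ k ∈ D.erase l, sg k D * sg l (D.erase k) * Φ k l := by
    apply Finset.sum_comm'
    intro x y
    simp only [Finset.mem_erase]
    constructor
    · rintro ⟨a, b, c⟩; exact ⟨⟨fun e => b e.symm, a⟩, c⟩
    · rintro ⟨⟨a, b⟩, c⟩; exact ⟨b, fun e => a e.symm, c⟩
  have h2 : ∑ l ∈ D, ∑ k ∈ D.erase l, sg k D * sg l (D.erase k) * Φ k l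
      = - ∑ l ∈ D, ∑ k ∈ D.erase l, sg l D * sg k (D.erase l) * Φ l k := by
    rw [← Finset.sum_neg_distrib]
    refine Finset.sum_congr rfl fun l hl => ?_
    rw [← Finset.sum_neg_distrib]
    refine Finset.sum_congr rfl fun k hk => ?_
    obtain ⟨hkl, hk⟩ := Finset.mem_erase.1 hk
    rw [sg_swap hk hl hkl, h k hk l hl hkl]; ring
  linarith

theorem cob_cob {m : ℕ} (β : (Fin m → ℤ) → Finset (Fin m) → ℤ) (a : Fin m → ℤ)
    (D : Finset (Fin m)) : cob (cob β) a D = 0 := by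
  rw [← sum_anti D (fun k l => (β (a + ee k + ee l) ((D.erase k).erase l)
    - β (a + ee k) ((D.erase k).erase l)) - (β (a + ee l) ((D.erase k).erase l)
    - β a ((D.erase k).erase l)))]
  · unfold cob
    refine Finset.sum_congr rfl fun k hk => ?_
    rw [← Finset.sum_sub_distrib, Finset.mul_sum]
    refine Finset.sum_congr rfl fun l hl => ?_
    ring
  · intro k _ l _ _
    rw [Finset.erase_right_comm, add_right_comm]; ring

theorem cob_smul {m : ℕ} (v : (Fin m → ℤ) → ℤ) (β : (Fin m → ℤ) → Finset (Fin m) → ℤ)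
    (a : Fin m → ℤ) (D : Finset (Fin m)) :
    cob (fun a D => v a * β a D) a D = cup v β a D + v a * cob β a D := by
  unfold cob cup
  rw [Finset.mul_sum, ← Finset.sum_add_distrib]
  refine Finset.sum_congr rfl fun k hk => ?_
  ring

theorem cob_add {m : ℕ} (β γ : (Fin m → ℤ) → Finset (Fin m) → ℤ)
    (a : Fin m → ℤ) (D : Finset (Fin m)) :
    cob (fun a D => β a D + γ a D) a D = cob β a D + cob γ a D := by
  unfold cob
  rw [← Finset.sum_add_distrib]
  refine Finset.sum_congr rfl fun k hk => ?_
  ring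

theorem cob_NN {m : ℕ} (L : List ((Fin m → ℤ) → ℤ)) : cob (NN L) = 0 := by
  induction L with
  | nil =>
    funext a D
    simp [cob, NN, unitC]
  | cons v L ih =>
    funext a D
    have h0 := cob_cob (fun a D => v a * NN L a D) a D
    have h1 : cob (fun a D => v a * NN L a D) = NN (v :: L) := by
      funext a D
      rw [cob_smul, ih]; simp [NN]
    rw [h1] at h0
    simpa using h0

/-- membership in a cube -/
def InC {m : ℕ} (a : Fin m → ℤ) (D : Finset (Fin m)) (x : Fin m → ℤ) : Prop :=
  ∀ i, x i = a i ∨ (i ∈ D ∧ x i = a i + 1)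

theorem mem_eCube {m : ℕ} (a : Fin m → ℤ) (D : Finset (Fin m)) (x : Fin m → ℤ) :
    x ∈ eCube a D ↔ InC a D x := by
  unfold eCube InC
  simp only [Finset.mem_image, Finset.mem_powerset]
  constructor
  · rintro ⟨s, hs, rfl⟩ i
    by_cases h : i ∈ s
    · right; exact ⟨hs h, by simp [h]⟩
    · left; simp [h]
  · intro h
    refine ⟨D.filter (fun i => x i = a i + 1), Finset.filter_subset _ _, ?_⟩
    funext i
    rcases h i with h | ⟨h1, h2⟩
    · simp [h]
    · simp [h1, h2]

theorem InC.base {m : ℕ} (a : Fin m → ℤ) (D : Finset (Fin m)) : InC a D a := fun _ => Or.inl rfl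

theorem InC.low {m : ℕ} {a : Fin m → ℤ} {D : Finset (Fin m)} {x : Fin m → ℤ} {k : Fin m}
    (h : InC a (D.erase k) x) : InC a D x := by
  intro i
  rcases h i with h | ⟨h, h'⟩
  · exact Or.inl h
  · exact Or.inr ⟨Finset.mem_of_mem_erase h, h'⟩

theorem InC.add {m : ℕ} {a : Fin m → ℤ} {D : Finset (Fin m)} {x : Fin m → ℤ} {k : Fin m}
    (hk : k ∈ D) (h : InC a (D.erase k) x) : InC a D (x + ee k) := by
  intro i
  by_cases hi : i = k
  · subst hi
    have := h i
    simp at this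
    right
    simp [ee, hk, this]
  · have : (x + ee k) i = x i := by simp [ee, hi]
    rw [this]
    exact h.low i

theorem InC.up {m : ℕ} {a : Fin m → ℤ} {D : Finset (Fin m)} {x : Fin m → ℤ} {k : Fin m}
    (hk : k ∈ D) (h : InC (a + ee k) (D.erase k) x) : InC a D x := by
  intro i
  by_cases hi : i = k
  · subst hi
    have := h i
    simp [ee] at this
    right
    simp [hk, this]
  · have := h i
    simp [ee, hi] at this
    exact this

theorem InC.split {m : ℕ} {a : Fin m → ℤ} {D : Finset (Fin m)} {x : Fin m → ℤ} {k : Fin m}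
    (h : InC a D x) (hk : x k = a k + 1) : InC (a + ee k) (D.erase k) x := by
  intro i
  by_cases hi : i = k
  · subst hi
    simp [ee, hk]
  · have := h i
    simpa [ee, hi] using this

/-- edge relation -/
def Ed {n : ℕ} (p q : Fin n → ℤ) : Prop :=
  p = q ∨ ∃ j, ∃ s : ℤ, (s = 1 ∨ s = -1) ∧ q = p + Pi.single j s

theorem Ed_of {n : ℕ} {p q : Fin n → ℤ} (h : p = q ∨ c1Adj p q) : Ed p q := by
  rcases h with h | h
  · exact Or.inl h
  · right
    unfold c1Adj at h
    have : ∃ j, p j ≠ q j := by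
      by_contra hc
      push Not at hc
      simp [hc] at h
    obtain ⟨j, hj⟩ := this
    rw [← Finset.add_sum_erase _ _ (Finset.mem_univ j)] at h
    have h1 : 1 ≤ |p j - q j| := Int.one_le_abs (sub_ne_zero.2 hj)
    have h2 : 0 ≤ ∑ x ∈ Finset.univ.erase j, |p x - q x| :=
      Finset.sum_nonneg fun _ _ => abs_nonneg _
    have h3 : ∑ x ∈ Finset.univ.erase j, |p x - q x| = 0 := by linarith
    have h4 : |p j - q j| = 1 := by linarith
    rw [Finset.sum_eq_zero_iff_of_nonneg (fun _ _ => abs_nonneg _)] at h3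
    refine ⟨j, q j - p j, ?_, ?_⟩
    · rcases (abs_eq (by norm_num)).1 h4 with h | h
      · right; linarith
      · left; linarith
    · funext i
      by_cases hi : i = j
      · subst hi; simp
      · have := h3 i (by simp [hi])
        rw [abs_eq_zero] at this
        simp [hi]; linarith

def Ct {m n : ℕ} (K : (Fin m → ℤ) → (Fin n → ℤ)) (a : Fin m → ℤ) (D : Finset (Fin m)) : Prop :=
  ∀ k ∈ D, ∀ x, InC a (D.erase k) x → Ed (K x) (K (x + ee k))

theorem Ct.up {m n : ℕ} {K : (Fin m → ℤ) → (Fin n → ℤ)} {a : Fin m → ℤ} {D : Finset (Fin m)}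
    (h : Ct K a D) {k : Fin m} (hk : k ∈ D) : Ct K (a + ee k) (D.erase k) := by
  intro l hl x hx
  have hl' := Finset.mem_erase.1 hl
  refine h l hl'.2 x ?_
  rw [Finset.erase_right_comm] at hx
  exact InC.up (Finset.mem_erase.2 ⟨fun e => hl'.1 e.symm, hk⟩) hx

def vv {m n : ℕ} (K : (Fin m → ℤ) → (Fin n → ℤ)) (b : Fin n → ℤ) (i : Fin n)
    (x : Fin m → ℤ) : ℤ := if b i + 1 ≤ K x i then 1 else 0

theorem vv_mul {m n : ℕ} (K : (Fin m → ℤ) → (Fin n → ℤ)) (b : Fin n → ℤ) {i j : Fin n}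
    (hij : i ≠ j) {x y : Fin m → ℤ} (h : Ed (K x) (K y)) :
    (vv K b i y - vv K b i x) * (vv K b j y - vv K b j x) = 0 := by
  unfold vv
  rcases h with h | ⟨l, s, hs, h⟩
  · simp [h]
  · by_cases hil : i = l
    · subst hil
      simp [h, hij.symm]
    · simp [h, hil]

theorem NN_swap {m n : ℕ} (K : (Fin m → ℤ) → (Fin n → ℤ)) (b : Fin n → ℤ) {i j : Fin n}
    (hij : i ≠ j) (L : List ((Fin m → ℤ) → ℤ)) {a : Fin m → ℤ} {D : Finset (Fin m)}
    (h : Ct K a D) :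
    NN (vv K b i :: vv K b j :: L) a D = - NN (vv K b j :: vv K b i :: L) a D := by
  rw [eq_neg_iff_add_eq_zero]
  rw [← sum_anti D (fun k l =>
    ((vv K b i (a + ee k + ee l) - vv K b i a) * (vv K b j (a + ee k + ee l) - vv K b j a))
     * NN L (a + ee k + ee l) ((D.erase k).erase l))]
  · simp only [NN]
    unfold cup
    rw [← Finset.sum_add_distrib]
    refine Finset.sum_congr rfl fun k hk => ?_
    simp only [Finset.mul_sum]
    rw [← Finset.sum_add_distrib]
    refine Finset.sum_congr rfl fun l hl => ?_
    have e1 := vv_mul K b hij (h k hk a (InC.base _ _))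
    have hl' := Finset.mem_erase.1 hl
    have e2 := vv_mul K b hij (h.up hk l hl (a + ee k) (InC.base _ _))
    linear_combination (-sg k D * sg l (D.erase k) * NN L (a + ee k + ee l) ((D.erase k).erase l)) * (e1 + e2)
  · intro k _ l _ _
    rw [Finset.erase_right_comm, add_right_comm]

theorem cup_congr {m : ℕ} (v : (Fin m → ℤ) → ℤ) {β γ : (Fin m → ℤ) → Finset (Fin m) → ℤ}
    {a : Fin m → ℤ} {D : Finset (Fin m)} (s : ℤ)
    (h : ∀ k ∈ D, β (a + ee k) (D.erase k) = s * γ (a + ee k) (D.erase k)) :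
    cup v β a D = s * cup v γ a D := by
  unfold cup
  rw [Finset.mul_sum]
  refine Finset.sum_congr rfl fun k hk => ?_
  rw [h k hk]; ring

theorem NN_perm {m n : ℕ} (K : (Fin m → ℤ) → (Fin n → ℤ)) (b : Fin n → ℤ) {l l' : List (Fin n)}
    (hp : l.Perm l') (hn : l.Nodup) :
    ∃ s : ℤ, ∀ a D, Ct K a D → NN (l.map (vv K b)) a D = s * NN (l'.map (vv K b)) a D := by
  induction hp with
  | nil => exact ⟨1, by simp⟩
  | cons x _ ih =>
    obtain ⟨s, hs⟩ := ih (List.nodup_cons.1 hn).2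
    refine ⟨s, fun a D h => ?_⟩
    exact cup_congr _ s fun k hk => hs _ _ (h.up hk)
  | swap x y l =>
    refine ⟨-1, fun a D h => ?_⟩
    have : y ≠ x := by
      rintro rfl
      simp at hn
    simp only [List.map_cons]
    rw [NN_swap K b this _ h]; ring
  | trans p1 p2 ih1 ih2 =>
    obtain ⟨s, hs⟩ := ih1 hn
    obtain ⟨t, ht⟩ := ih2 (p1.nodup_iff.1 hn)
    exact ⟨s * t, fun a D h => by rw [hs a D h, ht a D h]; ring⟩

theorem NN_card {m : ℕ} (L : List ((Fin m → ℤ) → ℤ)) (a : Fin m → ℤ) (D : Finset (Fin m))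
    (h : NN L a D ≠ 0) : D.card = L.length := by
  induction L generalizing a D with
  | nil =>
    simp [NN, unitC] at h
    simp [h]
  | cons v L ih =>
    simp only [NN, cup] at h
    obtain ⟨k, hk, h⟩ := Finset.exists_ne_zero_of_sum_ne_zero h
    have := ih _ _ (right_ne_zero_of_mul (right_ne_zero_of_mul h))
    rw [List.length_cons, ← this, Finset.card_erase_add_one hk]

theorem vv_ne {m n : ℕ} (K : (Fin m → ℤ) → (Fin n → ℤ)) (b : Fin n → ℤ) {i : Fin n}
    {x y : Fin m → ℤ} (h : Ed (K x) (K y)) (hv : vv K b i y - vv K b i x ≠ 0) :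
    ∃ s : ℤ, (s = 1 ∨ s = -1) ∧ K y = K x + Pi.single i s ∧ 2 * (K x i - b i) = 1 - s := by
  rcases h with h | ⟨l, s, hs, h⟩
  · exfalso; apply hv; simp [vv, h]
  · have hil : i = l := by
      by_contra hil
      apply hv
      simp [vv, h, hil]
    subst hil
    refine ⟨s, hs, h, ?_⟩
    unfold vv at hv
    rw [h] at hv
    simp only [Pi.add_apply, Pi.single_eq_same] at hv
    rcases hs with rfl | rfl <;> split_ifs at hv <;> simp at hv <;> omega

theorem iso {m n : ℕ} (K : (Fin m → ℤ) → (Fin n → ℤ)) (b : Fin n → ℤ)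
    (hne : Nonempty (Fin n → Fin m)) (q : ℕ) :
    ∀ (l : List (Fin n)) (a : Fin m → ℤ) (D : Finset (Fin m)), l.length = q → l.Nodup → Ct K a D →
    NN (l.map (vv K b)) a D ≠ 0 →
    ∃ (κ : Fin n → Fin m) (s : Fin n → ℤ), 
      (∀ i ∈ l, κ i ∈ D ∧ (s i = 1 ∨ s i = -1) ∧ 2 * (K a i - b i) = 1 - s i) ∧
      (∀ i ∈ l, ∀ j ∈ l, κ i = κ j → i = j) ∧
      (∀ k ∈ D, ∃ i ∈ l, κ i = k) ∧
      (∀ x, InC a D x → (∀ i ∈ l, K x i = K a i + s i * (x (κ i) - a (κ i))) ∧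
        ∀ j, j ∉ l → K x j = K a j) := by
  induction q with
  | zero =>
    intro l a D hl hn hc hN
    rw [List.length_eq_zero_iff] at hl
    subst hl
    have hD : D = ∅ := by
      have := NN_card _ _ _ hN
      simpa using this
    subst hD
    obtain ⟨κ⟩ := hne
    refine ⟨κ, fun _ => 1, by simp, by simp, by simp, ?_⟩
    intro x hx
    have : x = a := by
      funext i
      simpa using hx i
    subst this
    simp
  | succ q ih =>
    intro l a D hl hn hc hN
    have hcard : D.card = l.length := by simpa using NN_card _ _ _ hN
    have hstep : ∀ i : Fin n, ∃ k : Fin m, i ∈ l → (k ∈ D ∧ vv K b i (a + ee k) - vv K b i a ≠ 0 ∧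
        NN ((l.erase i).map (vv K b)) (a + ee k) (D.erase k) ≠ 0) := by
      intro i
      have hDne : D.Nonempty := by
        rw [← Finset.card_pos]; omega
      by_cases hi : i ∈ l
      · obtain ⟨s, hs⟩ := NN_perm K b (List.perm_cons_erase hi) hn
        have h1 := hs a D hc
        rw [h1] at hN
        have h2 := right_ne_zero_of_mul hN
        simp only [List.map_cons, NN, cup] at h2
        obtain ⟨k, hk, h⟩ := Finset.exists_ne_zero_of_sum_ne_zero h2
        have h3 := right_ne_zero_of_mul h
        exact ⟨k, fun _ => ⟨hk, left_ne_zero_of_mul h3, right_ne_zero_of_mul h3⟩⟩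
      · exact ⟨hDne.choose, fun h => absurd h hi⟩
    choose κ hκ using hstep
    have hs : ∀ i : Fin n, ∃ s : ℤ, i ∈ l → ((s = 1 ∨ s = -1) ∧
        K (a + ee (κ i)) = K a + Pi.single i s ∧ 2 * (K a i - b i) = 1 - s) := by
      intro i
      by_cases hi : i ∈ l
      · obtain ⟨h1, h2, h3⟩ := hκ i hi
        obtain ⟨s, hs⟩ := vv_ne K b (hc _ h1 a (InC.base _ _)) h2
        exact ⟨s, fun _ => hs⟩
      · exact ⟨0, fun h => absurd h hi⟩
    choose s hs using hs
    have hinj : ∀ i ∈ l, ∀ j ∈ l, κ i = κ j → i = j := by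
      intro i hi j hj h
      by_contra hij
      have h1 := (hs i hi).2.1
      have h2 := (hs j hj).2.1
      rw [← h, h1] at h2
      have := congrFun h2 i
      simp [hij] at this
      rcases (hs i hi).1 with h | h <;> omega
    have hsurj : ∀ k ∈ D, ∃ i ∈ l, κ i = k := by
      have hle : D.card ≤ (l.toFinset.image κ).card := by
        rw [Finset.card_image_of_injOn]
        · rw [List.toFinset_card_of_nodup hn, hcard]
        · intro i hi j hj h
          exact hinj i (by simpa using hi) j (by simpa using hj) h
      have hsub : l.toFinset.image κ ⊆ D := by
        intro k hk
        obtain ⟨i, hi, rfl⟩ := Finset.mem_image.1 hk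
        exact (hκ i (by simpa using hi)).1
      have := Finset.eq_of_subset_of_card_le hsub hle
      intro k hk
      rw [← this] at hk
      obtain ⟨i, hi, rfl⟩ := Finset.mem_image.1 hk
      exact ⟨i, by simpa using hi, rfl⟩
    refine ⟨κ, s, fun i hi => ⟨(hκ i hi).1, (hs i hi).1, (hs i hi).2.2⟩, hinj, hsurj, ?_⟩
    have IH := fun i (hi : i ∈ l) => ih (l.erase i) (a + ee (κ i)) (D.erase (κ i))
      (by rw [List.length_erase_of_mem hi]; omega) (hn.erase i) (hc.up (hκ i hi).1) (hκ i hi).2.2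
    intro x hx
    by_cases hxa : x = a
    · subst hxa; simp
    obtain ⟨k, hk⟩ : ∃ k, x k ≠ a k := by
      by_contra h; push Not at h; exact hxa (funext h)
    have hk' := (hx k).resolve_left hk
    obtain ⟨i, hi, rfl⟩ := hsurj k hk'.1
    have hx' := hx.split hk'.2
    obtain ⟨κ', s', g1, g2, g3, g4⟩ := IH i hi
    have hcons : ∀ j ∈ l, j ≠ i → κ' j = κ j ∧ s' j = s j := by
      intro j hj hji
      obtain ⟨κ'', s'', f1, f2, f3, f4⟩ := IH j hj
      have hne : κ j ≠ κ i := fun e => hji (hinj j hj i hi e)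
      have hje : j ∈ l.erase i := (List.mem_erase_of_ne hji).2 hj
      have m1 : InC (a + ee (κ i)) (D.erase (κ i)) (a + ee (κ i) + ee (κ j)) :=
        InC.add (Finset.mem_erase.2 ⟨hne, (hκ j hj).1⟩) (InC.base _ _)
      have m2 : InC (a + ee (κ j)) (D.erase (κ j)) (a + ee (κ i) + ee (κ j)) := by
        rw [add_right_comm]
        exact InC.add (Finset.mem_erase.2 ⟨hne.symm, (hκ i hi).1⟩) (InC.base _ _)
      have e1 := (g4 _ m1).1 j hje
      have e2 := (f4 _ m2).2 j (fun h => (hn.mem_erase_iff.1 h).1 rfl)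
      rw [e2, (hs j hj).2.1, (hs i hi).2.1] at e1
      simp only [Pi.add_apply, Pi.single_eq_same, Pi.single_eq_of_ne hji] at e1
      have e3 : s j = s' j * (ee (κ j) (κ' j)) := by linarith
      by_cases hkk : κ' j = κ j
      · rw [hkk] at e3
        simp [ee] at e3
        exact ⟨hkk, e3.symm⟩
      · simp [ee, hkk] at e3
        rcases (hs j hj).1 with h | h <;> omega
    constructor
    · intro j hj
      by_cases hji : j = i
      · subst hji
        rw [(g4 x hx').2 j (fun h => (hn.mem_erase_iff.1 h).1 rfl), (hs j hj).2.1, hk'.2]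
        simp
      · have hne : κ j ≠ κ i := fun e => hji (hinj j hj i hi e)
        rw [(g4 x hx').1 j ((List.mem_erase_of_ne hji).2 hj), (hs i hi).2.1,
          (hcons j hj hji).1, (hcons j hj hji).2]
        simp [hji, ee, hne]
    · intro j hj
      have hji : j ≠ i := fun e => hj (e ▸ hi)
      rw [(g4 x hx').2 j (fun h => hj (List.mem_of_mem_erase h)), (hs i hi).2.1]
      simp [hji]

def uu {m n : ℕ} (K : (Fin m → ℤ) → (Fin n → ℤ)) (b : Fin n → ℤ) (E : Finset (Fin n))
    (x : Fin m → ℤ) : ℤ := if (∀ j, j ∉ E → K x j = b j) then 1 else 0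

/-- coefficient of the cube `(b,E)` in the image of the cube `(a,D)` -/
def cf {m n : ℕ} (K : (Fin m → ℤ) → (Fin n → ℤ)) (b : Fin n → ℤ) (E : Finset (Fin n))
    (a : Fin m → ℤ) (D : Finset (Fin m)) : ℤ :=
  uu K b E a * NN ((E.sort (· ≤ ·)).map (vv K b)) a D

theorem cf_hit {m n : ℕ} (hne : Nonempty (Fin n → Fin m)) (K : (Fin m → ℤ) → (Fin n → ℤ)) (b : Fin n → ℤ) (E : Finset (Fin n))
    (a : Fin m → ℤ) (D : Finset (Fin m)) (hc : Ct K a D) (h : cf K b E a D ≠ 0)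
    (y : Fin n → ℤ) (hy : InC b E y) : ∃ x, InC a D x ∧ K x = y := by
  obtain ⟨κ, s, h1, h2, h3, h4⟩ := iso K b hne _ (E.sort (· ≤ ·)) a D rfl (Finset.sort_nodup _ _) hc
    (right_ne_zero_of_mul h)
  have hu : ∀ j, j ∉ E → K a j = b j := by
    have := left_ne_zero_of_mul h
    unfold uu at this
    by_contra hh
    simp [hh] at this
  simp only [Finset.mem_sort] at h1 h2 h3 h4
  classical
  let S : Finset (Fin m) := (E.filter (fun i => y i ≠ K a i)).image κ
  have hS : ∀ i ∈ E, (κ i ∈ S ↔ y i ≠ K a i) := by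
    intro i hi
    simp only [S, Finset.mem_image, Finset.mem_filter]
    constructor
    · rintro ⟨j, ⟨hj, hj'⟩, e⟩
      rw [← h2 j hj i hi e]; exact hj'
    · intro hh; exact ⟨i, ⟨hi, hh⟩, rfl⟩
  have hSD : S ⊆ D := by
    intro k hk
    simp only [S, Finset.mem_image, Finset.mem_filter] at hk
    obtain ⟨i, ⟨hi, _⟩, rfl⟩ := hk
    exact (h1 i hi).1
  refine ⟨fun k => if k ∈ S then a k + 1 else a k, ?_, ?_⟩
  · intro k
    by_cases hk : k ∈ S
    · simp [hk, hSD hk]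
    · simp [hk]
  · have hin : InC a D (fun k => if k ∈ S then a k + 1 else a k) := by
      intro k
      by_cases hk : k ∈ S
      · simp [hk, hSD hk]
      · simp [hk]
    obtain ⟨g1, g2⟩ := h4 _ hin
    funext i
    by_cases hi : i ∈ E
    · rw [g1 i hi]
      simp only [hS i hi]
      have := h1 i hi
      rcases hy i with hy | ⟨_, hy⟩ <;> rcases this.2.1 with e | e <;> rw [e] at this ⊢ <;>
        split_ifs <;> omega
    · rw [g2 i hi, hu i hi]
      rcases hy i with hy | ⟨hh, _⟩
      · exact hy.symm
      · exact absurd hh hi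

theorem uu_diff {m n : ℕ} (K : (Fin m → ℤ) → (Fin n → ℤ)) (b : Fin n → ℤ) (E : Finset (Fin n))
    {x y : Fin m → ℤ} (h : Ed (K x) (K y)) :
    uu K b E y - uu K b E x = ∑ j ∈ Eᶜ, uu K b (insert j E) x *
      ((vv K (b - ee j) j y - vv K (b - ee j) j x) - (vv K b j y - vv K b j x)) := by
  rcases h with h | ⟨l, s, hs, h⟩
  · simp [uu, vv, h]
  · by_cases hl : l ∈ E
    · rw [Finset.sum_eq_zero]
      · have : uu K b E y = uu K b E x := by
          unfold uu
          congr 1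
          apply propext
          refine forall_congr' fun j => forall_congr' fun hj => ?_
          have hjl : j ≠ l := fun e => hj (e ▸ hl)
          simp [h, hjl]
        rw [this, sub_self]
      · intro j hj
        have hjl : j ≠ l := fun e => (Finset.mem_compl.1 hj) (e ▸ hl)
        simp [vv, h, hjl]
    · rw [Finset.sum_eq_single l]
      · have key : ∀ z, uu K b E z = uu K b (insert l E) z * (if K z l = b l then 1 else 0) := by
          intro z
          unfold uu
          by_cases h1 : K z l = b l
          · simp only [h1, if_true, mul_one]
            congr 1
            apply propext
            constructor
            · intro hh j hj
              exact hh j (fun e => hj (Finset.mem_insert_of_mem e))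
            · intro hh j hj
              by_cases hjl : j = l
              · rw [hjl, h1]
              · exact hh j (by simp [hjl, hj])
          · rw [if_neg (fun hh => h1 (hh l hl))]; simp [h1]
        have key2 : uu K b (insert l E) y = uu K b (insert l E) x := by
          unfold uu
          congr 1
          apply propext
          refine forall_congr' fun j => forall_congr' fun hj => ?_
          have hjl : j ≠ l := fun e => hj (by simp [e])
          simp [h, hjl]
        rw [key, key, key2, ← mul_sub]
        congr 1
        have hv : ∀ z, (if K z l = b l then (1:ℤ) else 0) = vv K (b - ee l) l z - vv K b l z := by
          intro z
          unfold vv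
          simp only [ee, Pi.sub_apply, Pi.single_eq_same]
          split_ifs <;> omega
        rw [hv, hv]; ring
      · intro j _ hjl
        simp [vv, h, hjl]
      · intro hh
        exact absurd (Finset.mem_compl.2 hl) hh

theorem cup_uu {m n : ℕ} (K : (Fin m → ℤ) → (Fin n → ℤ)) (b : Fin n → ℤ) (E : Finset (Fin n))
    (β : (Fin m → ℤ) → Finset (Fin m) → ℤ) (a : Fin m → ℤ) (D : Finset (Fin m)) (hc : Ct K a D) :
    cup (uu K b E) β a D = ∑ j ∈ Eᶜ, uu K b (insert j E) a *
      (cup (vv K (b - ee j) j) β a D - cup (vv K b j) β a D) := by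
  unfold cup
  simp only [← Finset.sum_sub_distrib, Finset.mul_sum]
  rw [Finset.sum_comm]
  refine Finset.sum_congr rfl fun k hk => ?_
  rw [uu_diff K b E (hc k hk a (InC.base _ _)), Finset.sum_mul, Finset.mul_sum]
  refine Finset.sum_congr rfl fun j hj => ?_
  ring

theorem NN_oins {m n : ℕ} (K : (Fin m → ℤ) → (Fin n → ℤ)) (b : Fin n → ℤ) (j : Fin n)
    (l : List (Fin n)) (hl : l.Pairwise (· ≤ ·)) (hj : j ∉ l) (a : Fin m → ℤ)
    (D : Finset (Fin m)) (hc : Ct K a D) :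
    NN ((l.orderedInsert (· ≤ ·) j).map (vv K b)) a D =
      (-1) ^ (l.filter (· < j)).length * NN (vv K b j :: l.map (vv K b)) a D := by
  induction l generalizing a D with
  | nil => simp
  | cons x l ih =>
    simp only [List.mem_cons, not_or] at hj
    rw [List.pairwise_cons] at hl
    by_cases hjx : j ≤ x
    · have : (List.filter (fun y => decide (y < j)) (x :: l)) = [] := by
        rw [List.filter_eq_nil_iff]
        intro y hy
        rcases List.mem_cons.1 hy with rfl | hy
        · simpa using hjx
        · simpa using hjx.trans (hl.1 y hy)
      rw [this]
      simp [List.orderedInsert, hjx]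
    · have hxj : x < j := not_le.1 hjx
      rw [List.filter_cons_of_pos (by simpa using hxj)]
      simp only [List.orderedInsert, hjx, if_false, List.map_cons, List.length_cons]
      rw [NN_swap K b hj.1 _ hc]
      rw [show NN (vv K b x :: ((l.orderedInsert (· ≤ ·) j).map (vv K b))) a D
        = (-1) ^ (l.filter (· < j)).length * NN (vv K b x :: vv K b j :: l.map (vv K b)) a D from
        cup_congr _ _ fun k hk => ih hl.2 hj.2 _ _ (hc.up hk)]
      rw [pow_succ]; ring

theorem NN_insert {m n : ℕ} (K : (Fin m → ℤ) → (Fin n → ℤ)) (b : Fin n → ℤ) (j : Fin n)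
    (E : Finset (Fin n)) (hj : j ∉ E) (a : Fin m → ℤ)
    (D : Finset (Fin m)) (hc : Ct K a D) :
    NN (((insert j E).sort (· ≤ ·)).map (vv K b)) a D =
      sg j (insert j E) * NN (vv K b j :: (E.sort (· ≤ ·)).map (vv K b)) a D := by
  have h1 : (insert j E).sort (· ≤ ·) = (E.sort (· ≤ ·)).orderedInsert (· ≤ ·) j := by
    apply List.Perm.eq_of_pairwise (le := (· ≤ ·))
    · intro x y _ _ h1 h2; exact le_antisymm h1 h2
    · exact Finset.pairwise_sort _ _
    · exact (Finset.pairwise_sort E (· ≤ ·)).orderedInsert _ _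
    · refine List.Perm.trans ?_ (List.perm_orderedInsert _ _ _).symm
      rw [← Multiset.coe_eq_coe, ← Multiset.cons_coe, Finset.sort_eq, Finset.sort_eq,
        Finset.insert_val_of_notMem hj]
  rw [h1, NN_oins K b j _ (Finset.pairwise_sort _ _) (by simpa using hj) a D hc]
  congr 2
  rw [Finset.filter_insert, if_neg (lt_irrefl _)]
  rw [← Multiset.coe_card, ← Multiset.filter_coe, Finset.sort_eq]
  rfl

theorem cob_cf {m n : ℕ} (K : (Fin m → ℤ) → (Fin n → ℤ)) (b : Fin n → ℤ) (E : Finset (Fin n))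
    (a : Fin m → ℤ) (D : Finset (Fin m)) (hc : Ct K a D) :
    cob (cf K b E) a D = ∑ j ∈ Eᶜ, sg j (insert j E) *
      (cf K (b - ee j) (insert j E) a D - cf K b (insert j E) a D) := by
  have h0 : cob (cf K b E) a D = cup (uu K b E) (NN ((E.sort (· ≤ ·)).map (vv K b))) a D := by
    have := cob_smul (uu K b E) (NN ((E.sort (· ≤ ·)).map (vv K b))) a D
    rw [cob_NN] at this
    simp only [Pi.zero_apply, mul_zero, add_zero] at this
    exact this
  rw [h0, cup_uu K b E _ a D hc]
  refine Finset.sum_congr rfl fun j hj => ?_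
  have hj := Finset.mem_compl.1 hj
  unfold cf
  rw [NN_insert K b j E hj a D hc, NN_insert K (b - ee j) j E hj a D hc]
  have e1 : uu K (b - ee j) (insert j E) a = uu K b (insert j E) a := by
    unfold uu
    congr 1
    apply propext
    refine forall_congr' fun i => forall_congr' fun hi => ?_
    have hij : i ≠ j := fun e => hi (by simp [e])
    simp [ee, hij]
  have e2 : (E.sort (· ≤ ·)).map (vv K (b - ee j)) = (E.sort (· ≤ ·)).map (vv K b) := by
    apply List.map_congr_left
    intro i hi
    rw [Finset.mem_sort] at hi
    have hij : i ≠ j := fun e => hj (e ▸ hi)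
    funext x
    simp [vv, ee, hij]
  rw [e1, e2]
  have hsq : sg j (insert j E) * sg j (insert j E) = 1 := by
    unfold sg
    rw [← mul_pow]; simp
  simp only [NN]
  linear_combination (-(uu K b (insert j E) a) * (cup (vv K (b - ee j) j) (NN ((E.sort (· ≤ ·)).map (vv K b))) a D
    - cup (vv K b j) (NN ((E.sort (· ≤ ·)).map (vv K b))) a D)) * hsq

theorem sg_orderEmb {m q : ℕ} (D : Finset (Fin m)) (h : D.card = q) (j : Fin q) :
    sg (D.orderEmbOfFin h j) D = (-1) ^ (j : ℕ) := by
  unfold sg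
  congr 1
  have : D.filter (· < D.orderEmbOfFin h j) = (Finset.Iio j).map (D.orderEmbOfFin h).toEmbedding := by
    ext i
    simp only [Finset.mem_filter, Finset.mem_map, Finset.mem_Iio, RelEmbedding.coe_toEmbedding]
    constructor
    · rintro ⟨h1, h2⟩
      have : i ∈ Set.range (D.orderEmbOfFin h) := by rw [Finset.range_orderEmbOfFin]; exact h1
      obtain ⟨i, rfl⟩ := this
      exact ⟨i, by simpa using h2, rfl⟩
    · rintro ⟨i, hi, rfl⟩
      exact ⟨Finset.orderEmbOfFin_mem _ _ _, by simpa using hi⟩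
  rw [this, Finset.card_map, Fin.card_Iio]

theorem NN_det {m n : ℕ} (v : Fin n → (Fin m → ℤ) → ℤ) (M : Fin n → Fin m → ℤ) (q : ℕ)
    (L : Fin q → Fin n) (a : Fin m → ℤ) (D : Finset (Fin m)) (hD : D.card = q)
    (h : ∀ i, ∀ k ∈ D, ∀ x, InC a (D.erase k) x → v (L i) (x + ee k) - v (L i) x = M (L i) k) :
    NN (List.ofFn (fun i => v (L i))) a D =
      Matrix.det (Matrix.of fun i j : Fin q => M (L i) (D.orderEmbOfFin hD j)) := by
  induction q generalizing a D with
  | zero =>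
    have : D = ∅ := Finset.card_eq_zero.1 hD
    subst this
    simp [NN, unitC]
  | succ q ih =>
    rw [List.ofFn_succ, Matrix.det_succ_row_zero]
    simp only [NN, cup]
    have hmap : D = Finset.univ.map (D.orderEmbOfFin hD).toEmbedding := by
      ext i
      simp only [Finset.mem_map, Finset.mem_univ, true_and, RelEmbedding.coe_toEmbedding]
      have := Finset.range_orderEmbOfFin D hD
      rw [Set.ext_iff] at this
      exact (this i).symm
    conv_lhs => rw [hmap]
    rw [Finset.sum_map]
    rw [← hmap]
    refine Finset.sum_congr rfl fun j _ => ?_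
    have hk := Finset.orderEmbOfFin_mem D hD j
    have hcard : (D.erase (D.orderEmbOfFin hD j)).card = q := by
      rw [Finset.card_erase_of_mem hk, hD]; rfl
    simp only [RelEmbedding.coe_toEmbedding]
    rw [sg_orderEmb, h 0 _ hk a (InC.base _ _), ih (fun i => L i.succ) _ _ hcard]
    · rw [mul_assoc]
      congr 2
      have : ((D.erase (D.orderEmbOfFin hD j)).orderEmbOfFin hcard : Fin q → Fin m)
          = fun i => D.orderEmbOfFin hD (j.succAbove i) := by
        symm
        apply Finset.orderEmbOfFin_unique
        · intro i
          refine Finset.mem_erase.2 ⟨?_, Finset.orderEmbOfFin_mem _ _ _⟩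
          intro e
          exact Fin.succAbove_ne j i ((D.orderEmbOfFin hD).injective e)
        · exact (D.orderEmbOfFin hD).strictMono.comp (Fin.strictMono_succAbove j)
      congr 1
      ext i i'
      simp [this]
    · intro i k hk' x hx
      refine h i.succ k (Finset.mem_of_mem_erase hk') x ?_
      rw [Finset.erase_right_comm] at hx
      refine InC.up (Finset.mem_erase.2 ⟨?_, hk⟩) hx
      exact fun e => (Finset.mem_erase.1 hk').1 e.symm

def SF {n : ℕ} (f : (Fin n → ℤ) → (Fin n → ℤ)) (a : Fin n → ℤ) (D : Finset (Fin n))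
    (p : Equiv.Perm {i // i ∈ D} × ({i // i ∈ D} → ℤ)) : Prop :=
  (∀ i, p.2 i = 1 ∨ p.2 i = -1) ∧
      ∀ x ∈ eCube a D, ∀ i : {i // i ∈ D},
        f x (i : Fin n) = f a (i : Fin n) + p.2 i * (x ((p.1 i : Fin n)) - a ((p.1 i : Fin n)))

theorem cf_ne {n : ℕ} (f : (Fin n → ℤ) → (Fin n → ℤ)) (a : Fin n → ℤ) (D : Finset (Fin n))
    (hc : Ct f a D) (h : cf f a D a D ≠ 0) :
    (eCube a D).image f = eCube a D ∧ ∃ p, SF f a D p := by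
  obtain ⟨κ, s, h1, h2, h3, h4⟩ := iso f a ⟨id⟩ _ (D.sort (· ≤ ·)) a D rfl
    (Finset.sort_nodup _ _) hc (right_ne_zero_of_mul h)
  have hu : ∀ j, j ∉ D → f a j = a j := by
    have := left_ne_zero_of_mul h
    unfold uu at this
    by_contra hh
    simp [hh] at this
  simp only [Finset.mem_sort] at h1 h2 h3 h4
  constructor
  · ext y
    rw [mem_eCube, Finset.mem_image]
    constructor
    · rintro ⟨x, hx, rfl⟩
      rw [mem_eCube] at hx
      obtain ⟨g1, g2⟩ := h4 x hx
      intro i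
      by_cases hi : i ∈ D
      · have e := g1 i hi
        have := h1 i hi
        simp only [hi, true_and]
        rcases hx (κ i) with hx | ⟨_, hx⟩ <;> rw [hx] at e <;>
          rcases this.2.1 with e' | e' <;> rw [e'] at this e <;> omega
      · left
        rw [g2 i hi, hu i hi]
    · intro hy
      obtain ⟨x, hx, e⟩ := cf_hit ⟨id⟩ f a D a D hc h y hy
      exact ⟨x, (mem_eCube _ _ _).2 hx, e⟩
  · let κ' : {i // i ∈ D} → {i // i ∈ D} := fun i => ⟨κ i, (h1 i i.2).1⟩
    have hinj : Function.Injective κ' := by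
      intro i j e
      exact Subtype.ext (h2 i i.2 j j.2 (congrArg Subtype.val e))
    refine ⟨(Equiv.ofBijective κ' (Finite.injective_iff_bijective.1 hinj), fun i => s i),
      fun i => (h1 i i.2).2.1, fun x hx i => ?_⟩
    exact (h4 x ((mem_eCube _ _ _).1 hx)).1 i i.2

theorem cf_SF {n : ℕ} (f : (Fin n → ℤ) → (Fin n → ℤ)) (a : Fin n → ℤ) (D : Finset (Fin n))
    (him : (eCube a D).image f = eCube a D)
    (p : Equiv.Perm {i // i ∈ D} × ({i // i ∈ D} → ℤ)) (hp : SF f a D p) :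
    cf f a D a D = ((Equiv.Perm.sign p.1 : ℤˣ) : ℤ) * ∏ i, p.2 i := by
  have hmem : ∀ x, InC a D x → InC a D (f x) := by
    intro x hx
    rw [← mem_eCube] at hx ⊢
    rw [← him]
    exact Finset.mem_image_of_mem f hx
  have hu : uu f a D a = 1 := by
    unfold uu
    rw [if_pos]
    intro j hj
    exact (hmem a (InC.base _ _) j).resolve_right (fun h => hj h.1)
  have hv : ∀ i x, InC a D x → vv f a i x = f x i - a i := by
    intro i x hx
    unfold vv
    rcases hmem x hx i with h | ⟨_, h⟩ <;> split_ifs <;> omega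
  let M : Fin n → Fin n → ℤ := fun i k =>
    if h : i ∈ D then (if (p.1 ⟨i, h⟩ : Fin n) = k then p.2 ⟨i, h⟩ else 0) else 0
  have hsort : (D.sort (· ≤ ·)).map (vv f a) =
      List.ofFn (fun i => vv f a (D.orderEmbOfFin rfl i)) := by
    apply List.ext_getElem
    · simp
    · intro i h1 h2
      simp [Finset.orderEmbOfFin_apply]
  unfold cf
  rw [hu, one_mul, hsort, NN_det (vv f a) M D.card _ a D rfl]
  · have e1 : (Matrix.of fun i j : Fin D.card => M (D.orderEmbOfFin rfl i) (D.orderEmbOfFin rfl j))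
      = (Matrix.diagonal p.2 * p.1.toPEquiv.toMatrix).submatrix
        (D.orderIsoOfFin rfl).toEquiv (D.orderIsoOfFin rfl).toEquiv := by
      ext i j
      rw [Matrix.submatrix_apply, Matrix.diagonal_mul, PEquiv.toMatrix_apply]
      have hi := Finset.orderEmbOfFin_mem D rfl i
      have hh : (D.orderIsoOfFin rfl).toEquiv i = ⟨D.orderEmbOfFin rfl i, hi⟩ := rfl
      have hj : ((D.orderIsoOfFin rfl).toEquiv j : Fin n) = D.orderEmbOfFin rfl j := rfl
      simp only [Matrix.of_apply, M, hi, dif_pos, hh, Equiv.toPEquiv_apply, Option.mem_def,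
        Option.some.injEq, mul_ite, mul_one, mul_zero, Subtype.ext_iff, hj]
    rw [e1, Matrix.det_submatrix_equiv_self, Matrix.det_mul, Matrix.det_diagonal,
      Matrix.det_permutation, mul_comm]
    simp
  · intro i k hk x hx
    have hi := Finset.orderEmbOfFin_mem D rfl i
    rw [hv _ _ hx.low, hv _ _ (InC.add hk hx)]
    have h1 := hp.2 x ((mem_eCube _ _ _).2 hx.low) ⟨_, hi⟩
    have h2 := hp.2 (x + ee k) ((mem_eCube _ _ _).2 (InC.add hk hx)) ⟨_, hi⟩
    simp only at h1 h2
    rw [h1, h2]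
    simp only [M, hi, dif_pos]
    by_cases hpk : (p.1 ⟨_, hi⟩ : Fin n) = k
    · simp [hpk, ee]
      ring
    · simp [hpk, ee]

theorem cf_diag_pos {n : ℕ} (f : (Fin n → ℤ) → (Fin n → ℤ)) (a : Fin n → ℤ) (D : Finset (Fin n))
    (hc : Ct f a D) (him : (eCube a D).image f = eCube a D) :
    cubeSign f a D = cf f a D a D := by
  unfold cubeSign
  split_ifs with h
  · exact (cf_SF f a D him h.choose h.choose_spec).symm
  · by_contra hne
    exact h (cf_ne f a D hc (fun e => hne e.symm)).2

def cc {n : ℕ} (t : ℤ) (a : Fin n → ℤ) : Fin (n + 1) → ℤ := Fin.cons t a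

def up {n : ℕ} (D : Finset (Fin n)) : Finset (Fin (n + 1)) := D.map (Fin.succEmb n)

def JJ {n : ℕ} (D : Finset (Fin n)) : Finset (Fin (n + 1)) := insert 0 (up D)

theorem cc_add {n : ℕ} (t : ℤ) (a : Fin n → ℤ) (k : Fin n) :
    cc t a + ee k.succ = cc t (a + ee k) := by
  funext i
  refine Fin.cases ?_ (fun i => ?_) i
  · simp [cc, ee]
  · simp [cc, ee, Pi.single_apply]

theorem cc_add0 {n : ℕ} (t : ℤ) (a : Fin n → ℤ) : cc t a + ee 0 = cc (t + 1) a := by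
  funext i
  refine Fin.cases ?_ (fun i => ?_) i
  · simp [cc, ee]
  · simp [cc, ee]

theorem up_erase {n : ℕ} (D : Finset (Fin n)) (k : Fin n) :
    (up D).erase k.succ = up (D.erase k) := by
  unfold up
  rw [Finset.map_erase]; rfl

theorem zero_notMem_up {n : ℕ} (D : Finset (Fin n)) : (0 : Fin (n + 1)) ∉ up D := by
  simp [up, Fin.succ_ne_zero]

theorem JJ_erase {n : ℕ} (D : Finset (Fin n)) (k : Fin n) :
    (JJ D).erase k.succ = JJ (D.erase k) := by
  unfold JJ
  rw [Finset.erase_insert_of_ne (Fin.succ_ne_zero k).symm, up_erase]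

theorem JJ_erase0 {n : ℕ} (D : Finset (Fin n)) : (JJ D).erase 0 = up D :=
  Finset.erase_insert (zero_notMem_up D)

theorem sg_up {n : ℕ} (D : Finset (Fin n)) (k : Fin n) : sg k.succ (up D) = sg k D := by
  unfold sg up
  rw [Finset.filter_map, Finset.card_map]
  congr 2
  ext i
  rw [Finset.mem_filter, Finset.mem_filter]
  exact and_congr Iff.rfl Fin.succ_lt_succ_iff

theorem sg_JJ {n : ℕ} (D : Finset (Fin n)) (k : Fin n) : sg k.succ (JJ D) = - sg k D := by
  rw [← sg_up D k]
  unfold sg JJ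
  rw [Finset.filter_insert, if_pos (Fin.succ_pos k), Finset.card_insert_of_notMem, pow_succ]
  · ring
  · simp [zero_notMem_up]

theorem sg_JJ0 {n : ℕ} (D : Finset (Fin n)) : sg 0 (JJ D) = 1 := by
  unfold sg
  simp

theorem cob_JJ {n : ℕ} (γ : (Fin (n + 1) → ℤ) → Finset (Fin (n + 1)) → ℤ) (a : Fin n → ℤ)
    (D : Finset (Fin n)) : cob γ (cc 0 a) (JJ D) = γ (cc 1 a) (up D) - γ (cc 0 a) (up D)
      - ∑ k ∈ D, sg k D * (γ (cc 0 (a + ee k)) (JJ (D.erase k)) - γ (cc 0 a) (JJ (D.erase k))) := by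
  unfold cob
  have : ∀ F : Fin (n + 1) → ℤ, ∑ k ∈ JJ D, F k = F 0 + ∑ k ∈ D, F k.succ := by
    intro F
    unfold JJ
    rw [Finset.sum_insert (zero_notMem_up D)]
    unfold up
    rw [Finset.sum_map]; rfl
  rw [this, sg_JJ0, cc_add0, JJ_erase0, one_mul, zero_add, sub_eq_add_neg (_ - _) (Finset.sum _ _),
    ← Finset.sum_neg_distrib]
  congr 1
  refine Finset.sum_congr rfl fun k hk => ?_
  rw [sg_JJ, cc_add, JJ_erase]; ring

theorem NN_nat {n : ℕ} (t : ℤ) (L : List ((Fin (n + 1) → ℤ) → ℤ)) (a : Fin n → ℤ)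
    (D : Finset (Fin n)) :
    NN L (cc t a) (up D) = NN (L.map (fun v x => v (cc t x))) a D := by
  induction L generalizing a D with
  | nil => simp [NN, unitC, up]
  | cons v L ih =>
    simp only [List.map_cons, NN, cup]
    conv_lhs => rw [up, Finset.sum_map]
    refine Finset.sum_congr rfl fun k hk => ?_
    rw [show (Fin.succEmb n) k = k.succ from rfl, show Finset.map (Fin.succEmb n) D = up D from rfl,
      sg_up, cc_add, up_erase, ih]

theorem cf_nat {n r : ℕ} (t : ℤ) (K : (Fin (n + 1) → ℤ) → (Fin r → ℤ)) (b : Fin r → ℤ)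
    (E : Finset (Fin r)) (a : Fin n → ℤ) (D : Finset (Fin n)) :
    cf K b E (cc t a) (up D) = cf (fun x => K (cc t x)) b E a D := by
  unfold cf
  rw [NN_nat, List.map_map]
  rfl

theorem c1Adj_ee {m : ℕ} (x : Fin m → ℤ) (k : Fin m) : c1Adj x (x + ee k) := by
  unfold c1Adj
  rw [Finset.sum_eq_single k]
  · simp [ee]
  · intro j _ hj; simp [ee, hj]
  · simp

theorem sub_mem {m : ℕ} {X : Finset (Fin m → ℤ)} {a : Fin m → ℤ} {D : Finset (Fin m)}
    (h : eCube a D ⊆ X) {x : Fin m → ℤ} (hx : InC a D x) : x ∈ X := h ((mem_eCube _ _ _).2 hx)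

theorem Ct_of {m n : ℕ} {X : Finset (Fin m → ℤ)} {f : (Fin m → ℤ) → (Fin n → ℤ)}
    (hf : c1Cont X f) {a : Fin m → ℤ} {D : Finset (Fin m)} (h : eCube a D ⊆ X) : Ct f a D := by
  intro k hk x hx
  exact Ed_of (hf x (sub_mem h hx.low) _ (sub_mem h (InC.add hk hx)) (c1Adj_ee x k))

theorem InC_cc {n : ℕ} {a : Fin n → ℤ} {D : Finset (Fin n)} {x : Fin (n + 1) → ℤ}
    (h : InC (cc 0 a) (JJ D) x) : ∃ t x', x = cc t x' ∧ (t = 0 ∨ t = 1) ∧ InC a D x' := by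
  refine ⟨x 0, Fin.tail x, (Fin.cons_self_tail x).symm, ?_, ?_⟩
  · have := h 0
    simp [cc, JJ] at this
    exact this
  · intro i
    have := h i.succ
    simpa [cc, JJ, up, Fin.tail, Fin.succ_ne_zero] using this

def KK {n r : ℕ} (f g : (Fin n → ℤ) → (Fin r → ℤ)) (y : Fin (n + 1) → ℤ) : Fin r → ℤ :=
  if y 0 = 0 then f (Fin.tail y) else g (Fin.tail y)

theorem KK0 {n r : ℕ} (f g : (Fin n → ℤ) → (Fin r → ℤ)) (x : Fin n → ℤ) :
    KK f g (cc 0 x) = f x := by simp [KK, cc]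

theorem KK1 {n r : ℕ} (f g : (Fin n → ℤ) → (Fin r → ℤ)) (x : Fin n → ℤ) :
    KK f g (cc 1 x) = g x := by simp [KK, cc]

theorem Ct_KK {n r : ℕ} {X : Finset (Fin n → ℤ)} {f g : (Fin n → ℤ) → (Fin r → ℤ)}
    (hf : c1Cont X f) (hg : c1Cont X g) (hfg : ∀ x ∈ X, f x = g x ∨ c1Adj (f x) (g x))
    {a : Fin n → ℤ} {D : Finset (Fin n)} (h : eCube a D ⊆ X) :
    Ct (KK f g) (cc 0 a) (JJ D) := by
  intro k
  refine Fin.cases ?_ (fun k => ?_) k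
  · intro _ x hx
    obtain ⟨t, x', rfl, ht, hx'⟩ := InC_cc hx.low
    have h0 := hx 0
    simp [cc] at h0
    subst h0
    rw [cc_add0, zero_add, KK0, KK1]
    exact Ed_of (hfg x' (sub_mem h hx'))
  · intro hk x hx
    have hk' : k ∈ D := by simpa [JJ, up, Fin.succ_ne_zero] using hk
    rw [JJ_erase] at hx
    obtain ⟨t, x', rfl, ht, hx'⟩ := InC_cc hx
    rw [cc_add]
    rcases ht with rfl | rfl
    · rw [KK0, KK0]; exact Ct_of hf h k hk' x' hx'
    · rw [KK1, KK1]; exact Ct_of hg h k hk' x' hx'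

theorem cubLef_cf {n : ℕ} (X : Finset (Fin n → ℤ)) (f : (Fin n → ℤ) → (Fin n → ℤ))
    (hf : c1Cont X f) : cubLef X f = ∑ a ∈ X, ∑ D : Finset (Fin n),
      (if eCube a D ⊆ X then (1 : ℤ) else 0) * ((-1) ^ D.card * cf f a D a D) := by
  unfold cubLef
  refine Finset.sum_congr rfl fun a _ => Finset.sum_congr rfl fun D _ => ?_
  by_cases h : eCube a D ⊆ X
  · by_cases h' : (eCube a D).image f = eCube a D
    · rw [if_pos ⟨h, h'⟩, if_pos h, cf_diag_pos f a D (Ct_of hf h) h', one_mul]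
    · rw [if_neg (fun hh => h' hh.2)]
      have : cf f a D a D = 0 := by
        by_contra hne
        exact h' (cf_ne f a D (Ct_of hf h) hne).1
      rw [this]; simp
  · rw [if_neg (fun hh => h hh.1), if_neg h]; simp

theorem sum_reindex {n : ℕ} (φ : Finset (Fin n) → Finset (Fin n) → Fin n → ℤ) :
    ∑ D : Finset (Fin n), ∑ j ∈ Dᶜ, φ D (insert j D) j =
      ∑ D : Finset (Fin n), ∑ k ∈ D, φ (D.erase k) D k := by
  rw [Finset.sum_sigma', Finset.sum_sigma']
  refine Finset.sum_bij' (fun p _ => ⟨insert p.2 p.1, p.2⟩) (fun p _ => ⟨p.1.erase p.2, p.2⟩)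
    ?_ ?_ ?_ ?_ ?_
  · rintro ⟨D, j⟩ _; simp
  · rintro ⟨D, j⟩ _; simp
  · rintro ⟨D, j⟩ h
    have : j ∉ D := by simpa using h
    simp [Finset.erase_insert this]
  · rintro ⟨D, j⟩ h
    have : j ∈ D := by simpa using h
    simp [Finset.insert_erase this]
  · rintro ⟨D, j⟩ h
    have : j ∉ D := by simpa using h
    simp [Finset.erase_insert this]

theorem sum_shift {n : ℕ} (X : Finset (Fin n → ℤ)) (e : Fin n → ℤ) (h : (Fin n → ℤ) → ℤ)
    (hh : ∀ a, h a ≠ 0 → a ∈ X ∧ a + e ∈ X) : ∑ a ∈ X, h (a - e) = ∑ a ∈ X, h a := by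
  refine Finset.sum_bij_ne_zero (fun a _ _ => a - e) ?_ ?_ ?_ ?_
  · intro a _ h0; exact (hh _ h0).1
  · intro a _ _ b _ _ he; exact sub_left_injective he
  · intro b _ h0
    exact ⟨b + e, (hh b h0).2, by simpa using h0, by simp⟩
  · intro a _ _; rfl

theorem step {n : ℕ} (X : Finset (Fin n → ℤ)) (f g : (Fin n → ℤ) → (Fin n → ℤ))
    (hfX : MapsInto X X f) (hgX : MapsInto X X g) (hf : c1Cont X f) (hg : c1Cont X g)
    (hfg : ∀ x ∈ X, f x = g x ∨ c1Adj (f x) (g x)) : cubLef X f = cubLef X g := by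
  rw [cubLef_cf X f hf, cubLef_cf X g hg]
  set I : (Fin n → ℤ) → Finset (Fin n) → ℤ := fun a D => if eCube a D ⊆ X then (1 : ℤ) else 0
    with hI
  set P : (Fin n → ℤ) → Finset (Fin n) → (Fin n → ℤ) → Finset (Fin n) → ℤ :=
    fun a D b E => cf (KK f g) b E (cc 0 a) (JJ D) with hP
  -- the image of a prism lies in X
  have hPX : ∀ a D b E, eCube a D ⊆ X → P a D b E ≠ 0 → eCube b E ⊆ X := by
    intro a D b E h hne y hy
    obtain ⟨x, hx, rfl⟩ := cf_hit ⟨Fin.succ⟩ (KK f g) b E (cc 0 a) (JJ D) (Ct_KK hf hg hfg h)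
      hne y ((mem_eCube _ _ _).1 hy)
    obtain ⟨t, x', rfl, ht, hx'⟩ := InC_cc hx
    rcases ht with rfl | rfl
    · rw [KK0]; exact hfX _ (sub_mem h hx')
    · rw [KK1]; exact hgX _ (sub_mem h hx')
  have hlow : ∀ a (D : Finset (Fin n)) k, k ∈ D → eCube a D ⊆ X → eCube a (D.erase k) ⊆ X := by
    intro a D k _ h x hx
    exact sub_mem h ((mem_eCube _ _ _).1 hx).low
  have hup : ∀ a (D : Finset (Fin n)) k, k ∈ D → eCube a D ⊆ X →
      eCube (a + ee k) (D.erase k) ⊆ X := by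
    intro a D k hk h x hx
    exact sub_mem h (InC.up hk ((mem_eCube _ _ _).1 hx))
  have hIl : ∀ a D, ∀ k ∈ D, I a (D.erase k) * P a (D.erase k) a D
      = I a D * P a (D.erase k) a D := by
    intro a D k hk
    by_cases h0 : P a (D.erase k) a D = 0
    · simp [h0]
    · by_cases h1 : eCube a D ⊆ X
      · simp [hI, h1, hlow a D k hk h1]
      · have : ¬ eCube a (D.erase k) ⊆ X := fun h => h1 (hPX _ _ _ _ h h0)
        simp [hI, h1, this]
  have hIu : ∀ a D, ∀ k ∈ D, I a (D.erase k) * P a (D.erase k) (a - ee k) D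
      = I (a - ee k) D * P (a - ee k + ee k) (D.erase k) (a - ee k) D := by
    intro a D k hk
    rw [sub_add_cancel]
    by_cases h0 : P a (D.erase k) (a - ee k) D = 0
    · simp [h0]
    · by_cases h1 : eCube (a - ee k) D ⊆ X
      · have h2 := hup (a - ee k) D k hk h1
        rw [sub_add_cancel] at h2
        simp [hI, h1, h2]
      · have : ¬ eCube a (D.erase k) ⊆ X := fun h => h1 (hPX _ _ _ _ h h0)
        simp [hI, h1, this]
  have hmain : ∀ a D, I a D * ((-1) ^ D.card * cf g a D a D)
      = I a D * ((-1) ^ D.card * cf f a D a D)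
      + I a D * ((-1) ^ D.card * ∑ k ∈ D, sg k D *
          (P (a + ee k) (D.erase k) a D - P a (D.erase k) a D))
      + ∑ j ∈ Dᶜ, I a D * (-1) ^ D.card * (sg j (insert j D) *
          (P a D (a - ee j) (insert j D) - P a D a (insert j D))) := by
    intro a D
    by_cases h : eCube a D ⊆ X
    · have e1 := cob_cf (KK f g) a D (cc 0 a) (JJ D) (Ct_KK hf hg hfg h)
      rw [cob_JJ, cf_nat, cf_nat] at e1
      simp only [KK0, KK1] at e1
      rw [← Finset.mul_sum]
      simp only [hP]
      rw [← e1]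
      ring
    · simp [hI, h]
  change ∑ a ∈ X, ∑ D : Finset (Fin n), I a D * ((-1) ^ D.card * cf f a D a D)
    = ∑ a ∈ X, ∑ D : Finset (Fin n), I a D * ((-1) ^ D.card * cf g a D a D)
  simp only [hmain, Finset.sum_add_distrib]
  have key : ∑ a ∈ X, ∑ D : Finset (Fin n), ∑ j ∈ Dᶜ, I a D * (-1) ^ D.card *
      (sg j (insert j D) * (P a D (a - ee j) (insert j D) - P a D a (insert j D)))
      = - ∑ a ∈ X, ∑ D : Finset (Fin n), I a D * ((-1) ^ D.card * ∑ k ∈ D, sg k D *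
          (P (a + ee k) (D.erase k) a D - P a (D.erase k) a D)) := by
    have r : ∀ a, ∑ D : Finset (Fin n), ∑ j ∈ Dᶜ, I a D * (-1) ^ D.card *
      (sg j (insert j D) * (P a D (a - ee j) (insert j D) - P a D a (insert j D)))
      = ∑ D : Finset (Fin n), ∑ k ∈ D, I a (D.erase k) * (-1) ^ (D.erase k).card *
      (sg k D * (P a (D.erase k) (a - ee k) D - P a (D.erase k) a D)) := fun a =>
      sum_reindex (fun D D' j => I a D * (-1) ^ D.card *
        (sg j D' * (P a D (a - ee j) D' - P a D a D')))
    simp only [r, Finset.mul_sum]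
    rw [Finset.sum_comm, Finset.sum_comm (s := X), ← Finset.sum_neg_distrib]
    refine Finset.sum_congr rfl fun D _ => ?_
    rw [Finset.sum_comm, Finset.sum_comm (s := X), ← Finset.sum_neg_distrib]
    refine Finset.sum_congr rfl fun k hk => ?_
    have hs := sum_shift X (ee k) (fun a => I a D * P (a + ee k) (D.erase k) a D) (by
      intro a h0
      have hc : eCube a D ⊆ X := by
        by_contra hc
        simp [hI, hc] at h0
      exact ⟨sub_mem hc (InC.base _ _), sub_mem hc (InC.add hk (InC.base _ _))⟩)
    have hcard : (-1 : ℤ) ^ D.card = - (-1) ^ (D.erase k).card := by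
      rw [← Finset.card_erase_add_one hk, pow_succ]; ring
    have l1 : ∑ a ∈ X, I a (D.erase k) * (-1) ^ (D.erase k).card *
        (sg k D * (P a (D.erase k) (a - ee k) D - P a (D.erase k) a D))
        = (-1) ^ (D.erase k).card * sg k D *
        (∑ a ∈ X, I (a - ee k) D * P (a - ee k + ee k) (D.erase k) (a - ee k) D
          - ∑ a ∈ X, I a D * P a (D.erase k) a D) := by
      rw [← Finset.sum_sub_distrib, Finset.mul_sum]
      refine Finset.sum_congr rfl fun a _ => ?_
      rw [← hIu a D k hk, ← hIl a D k hk]; ring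
    have l2 : ∑ a ∈ X, I a D * ((-1) ^ D.card * (sg k D *
          (P (a + ee k) (D.erase k) a D - P a (D.erase k) a D)))
        = - ((-1) ^ (D.erase k).card * sg k D *
        (∑ a ∈ X, I a D * P (a + ee k) (D.erase k) a D
          - ∑ a ∈ X, I a D * P a (D.erase k) a D)) := by
      rw [← Finset.sum_sub_distrib, Finset.mul_sum, ← Finset.sum_neg_distrib]
      refine Finset.sum_congr rfl fun a _ => ?_
      rw [hcard]; ring
    rw [l1, l2, hs, neg_neg]
  rw [key]; ring

end CL

/-- Let `X ⊆ ℤ^n` be a finite digital image with `c1`-adjacency, `n ≤ 3`, and let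
`f, g : X → X` be `c1`-continuous self-maps that are homotopic. Then `L̄(f) = L̄(g)`. -/
theorem cubLef_eq_of_homotopic {n : ℕ} (hn : n ≤ 3) (X : Finset (Fin n → ℤ))
    (f g : (Fin n → ℤ) → (Fin n → ℤ))
    (hfX : MapsInto X X f) (hgX : MapsInto X X g)
    (hf : c1Cont X f) (hg : c1Cont X g)
    (hfg : c1Homotopic X X f g) :
    cubLef X f = cubLef X g := by
  obtain ⟨k, H, h1, h2, h3, h4, h5⟩ := hfg
  have hm : ∀ t ≤ k, cubLef X f = cubLef X (fun x => H x t) := by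
    intro t
    induction t with
    | zero =>
      intro h0
      exact CL.step X f _ hfX (fun x hx => h1 x hx 0 h0) hf
        (fun x hx y hy => h5 0 h0 x hx y hy) (fun x hx => Or.inl (h2 x hx).symm)
    | succ t ih =>
      intro ht
      have ht' : t ≤ k := by omega
      rw [ih ht']
      exact CL.step X _ _ (fun x hx => h1 x hx t ht') (fun x hx => h1 x hx (t + 1) ht)
        (fun x hx y hy => h5 t ht' x hx y hy) (fun x hx y hy => h5 (t + 1) ht x hx y hy)
        (fun x hx => h4 x hx t ht)
  rw [hm k le_rfl]
  exact CL.step X _ g (fun x hx => h1 x hx k le_rfl) hgX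
    (fun x hx y hy => h5 k le_rfl x hx y hy) hg (fun x hx => Or.inl (h3 x hx))
end

section
/- Let X ⊆ ℤ^n be a finite digital image with c1-adjacency, where n ≤ 4, and let f : X → X be a c1-continuous self-map with L̄(f) ≠ 0. Then either f has a fixed point, or f has at least two distinct n-approximate fixed points; in particular there exists an elementary cube σ ⊆ X with f(σ) = σ. -/
lemma mem_eCube_iff' {n : ℕ} (a : Fin n → ℤ) (D : Finset (Fin n)) (x : Fin n → ℤ) :
    x ∈ eCube a D ↔ ∀ i, x i = a i ∨ (i ∈ D ∧ x i = a i + 1) := by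
  classical
  unfold eCube
  simp only [Finset.mem_image, Finset.mem_powerset]
  constructor
  · rintro ⟨s, hs, rfl⟩ i
    by_cases h : i ∈ s
    · right; exact ⟨hs h, by simp [h]⟩
    · left; simp [h]
  · intro h
    refine ⟨D.filter (fun i => x i = a i + 1), Finset.filter_subset _ _, ?_⟩
    funext i
    rcases h i with h1 | ⟨h1, h2⟩
    · simp [h1]
    · simp [h1, h2]

lemma approx_of_cube {n : ℕ} (X : Finset (Fin n → ℤ)) (f : (Fin n → ℤ) → (Fin n → ℤ))
    (a : Fin n → ℤ) (D : Finset (Fin n)) (hX : eCube a D ⊆ X)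
    (hf : (eCube a D).image f = eCube a D) (x : Fin n → ℤ) (hx : x ∈ eCube a D) :
    nApproxFix X f n x := by
  have hfx : f x ∈ eCube a D := hf ▸ Finset.mem_image_of_mem f hx
  rw [mem_eCube_iff'] at hx hfx
  refine ⟨n, fun t i => if i.val < t then f x i else x i, le_rfl, ?_, ?_, ?_, ?_⟩
  · funext i; simp
  · funext i; simp
  · intro t _
    apply hX
    rw [mem_eCube_iff']
    intro i
    dsimp only
    split_ifs
    · exact hfx i
    · exact hx i
  · intro t ht
    have ht' : t < n := ht
    by_cases h : x ⟨t, ht'⟩ = f x ⟨t, ht'⟩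
    · left
      funext i
      by_cases hi : i = ⟨t, ht'⟩
      · subst hi; simp [h]
      · have : i.val ≠ t := fun h => hi (Fin.ext h)
        have : i.val < t + 1 ↔ i.val < t := by omega
        simp [this]
    · right
      unfold c1Adj
      rw [Finset.sum_eq_single (⟨t, ht'⟩ : Fin n)]
      · simp only [lt_irrefl, if_false, Nat.lt_succ_self, if_true]
        rcases hx ⟨t, ht'⟩ with h1 | ⟨_, h1⟩ <;> rcases hfx ⟨t, ht'⟩ with h2 | ⟨_, h2⟩ <;>
          rw [h1, h2] at h ⊢ <;> simp at h ⊢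
      · intro i _ hi
        have : i.val ≠ t := fun h => hi (Fin.ext h)
        have : i.val < t + 1 ↔ i.val < t := by omega
        simp [this]
      · simp

/-- Let `X ⊆ ℤ^n` be a finite digital image with `c1`-adjacency, `n ≤ 4`, and let
`f : X → X` be a `c1`-continuous self-map with `L̄(f) ≠ 0`. Then either `f` has a fixed
point, or `f` has at least two distinct `n`-approximate fixed points; in particular there
is an elementary cube `σ ⊆ X` with `f(σ) = σ`. -/
theorem cubLef_ne_zero_fixed_or_approx {n : ℕ} (hn : n ≤ 4) (X : Finset (Fin n → ℤ))
    (f : (Fin n → ℤ) → (Fin n → ℤ))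
    (hfX : MapsInto X X f) (hf : c1Cont X f) (hL : cubLef X f ≠ 0) :
    ((∃ x ∈ X, f x = x) ∨
      ∃ x ∈ X, ∃ y ∈ X, x ≠ y ∧ nApproxFix X f n x ∧ nApproxFix X f n y) ∧
    ∃ (a : Fin n → ℤ) (D : Finset (Fin n)),
      eCube a D ⊆ X ∧ (eCube a D).image f = eCube a D := by
  classical
  have hcube : ∃ (a : Fin n → ℤ) (D : Finset (Fin n)),
      eCube a D ⊆ X ∧ (eCube a D).image f = eCube a D := by
    by_contra hcon
    push Not at hcon
    apply hL
    unfold cubLef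
    refine Finset.sum_eq_zero fun a _ => Finset.sum_eq_zero fun D _ => if_neg ?_
    rintro ⟨h1, h2⟩
    apply hcon a D h1
    convert h2
  refine ⟨?_, hcube⟩
  obtain ⟨a, D, h1, h2⟩ := hcube
  have ha : a ∈ eCube a D := (mem_eCube_iff' _ _ _).2 fun i => Or.inl rfl
  rcases D.eq_empty_or_nonempty with rfl | ⟨j, hj⟩
  · left
    refine ⟨a, h1 ha, ?_⟩
    have : f a ∈ eCube a ∅ := h2 ▸ Finset.mem_image_of_mem f ha
    rw [mem_eCube_iff'] at this
    funext i
    simpa using this i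
  · right
    have hb : Function.update a j (a j + 1) ∈ eCube a D := by
      rw [mem_eCube_iff']
      intro i
      by_cases hi : i = j
      · subst hi; right; simp [hj]
      · left; simp [hi]
    refine ⟨a, h1 ha, _, h1 hb, ?_, approx_of_cube X f a D h1 h2 _ ha,
      approx_of_cube X f a D h1 h2 _ hb⟩
    intro h
    have := congrFun h j
    simp at this
end
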